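/- arXiv:2510.25576 — 8 statements merged into one kernel-verified Lean document; each statement's English description precedes it below -/
import Mathlib

section
/- For every x₀ > 0 and L > 3x₀, the critical curve γ = (x,y) satisfies: |γ̇(s)| = 1 for all s ∈ [0,2L] (arc-length parametrization); γ is an admissible vertically symmetric curve; ẏ(0) = ẏ(2L) = 0; the curvature of γ equals H(s) = π/(σ√(κ² − (s−L)²)) for all s; and the Euler–Lagrange equation 2 + (d²/ds²)(H(s)⁻²) = λ = 2L/(L+x₀) holds for all s ∈ [0,2L]. -/
open Real Set

/-- `σ = π √(x₀/(L+x₀))` -/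
noncomputable def sig (x0 L : ℝ) : ℝ := π * Real.sqrt (x0 / (L + x0))

/-- `κ = L / sin σ` -/
noncomputable def kap (x0 L : ℝ) : ℝ := L / Real.sin (sig x0 L)

/-- the curvature of the critical curve: `H(s) = π/(σ √(κ² − (s−L)²))` -/
noncomputable def Hc (x0 L s : ℝ) : ℝ :=
  π / (sig x0 L * Real.sqrt (kap x0 L ^ 2 - (s - L) ^ 2))

/-- first component of the critical curve -/
noncomputable def xc (x0 L s : ℝ) : ℝ :=
  -(kap x0 L / 2) *
    ((sig x0 L / (π + sig x0 L)) *
        Real.sin (((π + sig x0 L) / sig x0 L) * Real.arcsin ((s - L) / kap x0 L)) +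
      (sig x0 L / (π - sig x0 L)) *
        Real.sin (((π - sig x0 L) / sig x0 L) * Real.arcsin ((s - L) / kap x0 L)))

/-- second component of the critical curve -/
noncomputable def yc (x0 L s : ℝ) : ℝ :=
  kap x0 L / 2 *
    ((sig x0 L / (π + sig x0 L)) *
        Real.cos (((π + sig x0 L) / sig x0 L) * Real.arcsin ((s - L) / kap x0 L)) +
      (sig x0 L / (π - sig x0 L)) *
        Real.cos (((π - sig x0 L) / sig x0 L) * Real.arcsin ((s - L) / kap x0 L))) +
  π * x0 / (sig x0 L * Real.tan (sig x0 L))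

/-- curvature `⟨ċ, c̈^⊥⟩/|ċ|³` of the plane curve `c = (u, v)`,
where `(a₁,a₂)^⊥ = (a₂,−a₁)`. -/
noncomputable def curv (u v : ℝ → ℝ) (s : ℝ) : ℝ :=
  (deriv u s * deriv (deriv v) s - deriv v s * deriv (deriv u) s) /
    Real.sqrt (deriv u s ^ 2 + deriv v s ^ 2) ^ 3

/-- admissible curve with boundary points `(x₀,0)`, `(−x₀,0)` in the upper half plane -/
def Admissible (x0 L : ℝ) (u v : ℝ → ℝ) : Prop :=
  ContDiffOn ℝ (⊤ : ℕ∞) u (Set.Icc 0 (2 * L)) ∧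
  ContDiffOn ℝ (⊤ : ℕ∞) v (Set.Icc 0 (2 * L)) ∧
  (∀ s ∈ Set.Icc (0:ℝ) (2 * L), 0 < Real.sqrt (deriv u s ^ 2 + deriv v s ^ 2)) ∧
  Set.InjOn (fun s => (u s, v s)) (Set.Icc 0 (2 * L)) ∧
  (∀ s ∈ Set.Icc (0:ℝ) (2 * L), 0 < curv u v s) ∧
  u 0 = x0 ∧ v 0 = 0 ∧ u (2 * L) = -x0 ∧ v (2 * L) = 0 ∧
  (∀ s ∈ Set.Ioo (0:ℝ) (2 * L), 0 < v s)

/-- vertical symmetry of the curve `(u, v)` on `[0, 2L]` -/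
def VertSym (L : ℝ) (u v : ℝ → ℝ) : Prop :=
  ∀ s ∈ Set.Icc (0:ℝ) (2 * L), u (2 * L - s) = -u s ∧ v (2 * L - s) = v s

lemma sig_facts (x0 L : ℝ) (hx0 : 0 < x0) (hL : 3 * x0 < L) :
    0 < sig x0 L ∧ sig x0 L < π / 2 ∧ sig x0 L ^ 2 = π ^ 2 * (x0 / (L + x0)) := by
  have hq : 0 < x0 / (L + x0) := by
    have : 0 < L + x0 := by linarith
    positivity
  have hq2 : Real.sqrt (x0 / (L + x0)) < 1 / 2 := by
    rw [Real.sqrt_lt' (by norm_num), div_lt_iff₀ (by linarith)]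
    linarith
  have := Real.pi_pos
  refine ⟨?_, ?_, ?_⟩
  · exact mul_pos this (Real.sqrt_pos.2 hq)
  · unfold sig; nlinarith
  · unfold sig; rw [mul_pow, Real.sq_sqrt hq.le]

lemma kap_facts (x0 L : ℝ) (hx0 : 0 < x0) (hL : 3 * x0 < L) :
    L < kap x0 L ∧ L = kap x0 L * Real.sin (sig x0 L) ∧ 0 < Real.sin (sig x0 L) := by
  obtain ⟨h1, h2, -⟩ := sig_facts x0 L hx0 hL
  have := Real.pi_pos
  have hs : 0 < Real.sin (sig x0 L) := Real.sin_pos_of_pos_of_lt_pi h1 (by linarith)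
  have hs1 : Real.sin (sig x0 L) < 1 := by
    rw [← Real.sin_pi_div_two]
    exact Real.sin_lt_sin_of_lt_of_le_pi_div_two (by linarith) le_rfl h2
  refine ⟨?_, ?_, hs⟩
  · unfold kap
    rw [lt_div_iff₀ hs]
    nlinarith
  · unfold kap; field_simp

/-- the angle -/
noncomputable def tht (x0 L s : ℝ) : ℝ := Real.arcsin ((s - L) / kap x0 L)

lemma cos_tht (x0 L s : ℝ) (hk : 0 < kap x0 L) :
    kap x0 L * Real.cos (tht x0 L s) = Real.sqrt (kap x0 L ^ 2 - (s - L) ^ 2) := by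
  unfold tht
  rw [Real.cos_arcsin]
  have : kap x0 L ^ 2 - (s - L) ^ 2 = kap x0 L ^ 2 * (1 - ((s - L) / kap x0 L) ^ 2) := by
    field_simp
  rw [this, Real.sqrt_mul (sq_nonneg _), Real.sqrt_sq hk.le]

lemma in_range (x0 L s : ℝ) (hk : 0 < kap x0 L) (hs : |s - L| < kap x0 L) :
    -1 < (s - L) / kap x0 L ∧ (s - L) / kap x0 L < 1 := by
  rw [abs_lt] at hs
  rw [lt_div_iff₀ hk, div_lt_iff₀ hk]
  constructor <;> linarith

lemma cos_tht_pos (x0 L s : ℝ) (hk : 0 < kap x0 L) (hs : |s - L| < kap x0 L) :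
    0 < Real.cos (tht x0 L s) := by
  obtain ⟨h1, h2⟩ := in_range x0 L s hk hs
  apply Real.cos_pos_of_mem_Ioo
  exact ⟨Real.neg_pi_div_two_lt_arcsin.2 h1, Real.arcsin_lt_pi_div_two.2 h2⟩

lemma hasDerivAt_tht (x0 L s : ℝ) (hk : 0 < kap x0 L) (hs : |s - L| < kap x0 L) :
    HasDerivAt (tht x0 L) (1 / (kap x0 L * Real.cos (tht x0 L s))) s := by
  obtain ⟨h1, h2⟩ := in_range x0 L s hk hs
  have h := (Real.hasDerivAt_arcsin h1.ne' h2.ne).comp s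
    (((hasDerivAt_id s).sub_const L).div_const (kap x0 L))
  refine HasDerivAt.congr_deriv h ?_
  unfold tht
  rw [Real.cos_arcsin]
  rw [one_div_mul_one_div, mul_comm]

lemma hasDerivAt_xc (x0 L s : ℝ) (hk : 0 < kap x0 L) (hs : |s - L| < kap x0 L)
    (h1 : 0 < sig x0 L) (h2 : sig x0 L < π) :
    HasDerivAt (xc x0 L) (-Real.cos (π / sig x0 L * tht x0 L s)) s := by
  have hc := cos_tht_pos x0 L s hk hs
  have ht := hasDerivAt_tht x0 L s hk hs
  have e1 := ((ht.const_mul ((π + sig x0 L) / sig x0 L)).sin).const_mul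
    (sig x0 L / (π + sig x0 L))
  have e2 := ((ht.const_mul ((π - sig x0 L) / sig x0 L)).sin).const_mul
    (sig x0 L / (π - sig x0 L))
  have e := (e1.add e2).const_mul (-(kap x0 L / 2))
  refine HasDerivAt.congr_deriv e ?_
  have a1 : (π + sig x0 L) / sig x0 L * tht x0 L s = π / sig x0 L * tht x0 L s + tht x0 L s := by
    field_simp
  have a2 : (π - sig x0 L) / sig x0 L * tht x0 L s = π / sig x0 L * tht x0 L s - tht x0 L s := by
    field_simp
  rw [a1, a2, Real.cos_add, Real.cos_sub]
  have : π + sig x0 L ≠ 0 := by linarith [Real.pi_pos]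
  have : π - sig x0 L ≠ 0 := by linarith [Real.pi_pos]
  field_simp
  ring

lemma hasDerivAt_yc (x0 L s : ℝ) (hk : 0 < kap x0 L) (hs : |s - L| < kap x0 L)
    (h1 : 0 < sig x0 L) (h2 : sig x0 L < π) :
    HasDerivAt (yc x0 L) (-Real.sin (π / sig x0 L * tht x0 L s)) s := by
  have hc := cos_tht_pos x0 L s hk hs
  have ht := hasDerivAt_tht x0 L s hk hs
  have e1 := ((ht.const_mul ((π + sig x0 L) / sig x0 L)).cos).const_mul
    (sig x0 L / (π + sig x0 L))
  have e2 := ((ht.const_mul ((π - sig x0 L) / sig x0 L)).cos).const_mul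
    (sig x0 L / (π - sig x0 L))
  have e := ((e1.add e2).const_mul (kap x0 L / 2)).add_const
    (π * x0 / (sig x0 L * Real.tan (sig x0 L)))
  refine HasDerivAt.congr_deriv e ?_
  have a1 : (π + sig x0 L) / sig x0 L * tht x0 L s = π / sig x0 L * tht x0 L s + tht x0 L s := by
    field_simp
  have a2 : (π - sig x0 L) / sig x0 L * tht x0 L s = π / sig x0 L * tht x0 L s - tht x0 L s := by
    field_simp
  rw [a1, a2, Real.sin_add, Real.sin_sub]
  have : π + sig x0 L ≠ 0 := by linarith [Real.pi_pos]
  have : π - sig x0 L ≠ 0 := by linarith [Real.pi_pos]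
  field_simp
  ring

lemma ev_range (k L s : ℝ) (hs : |s - L| < k) : ∀ᶠ t in nhds s, |t - L| < k := by
  have : Continuous fun t : ℝ => |t - L| := by fun_prop
  exact this.continuousAt.eventually_lt continuousAt_const hs

lemma contDiffAt_tht (x0 L s : ℝ) (hk : 0 < kap x0 L) (hs : |s - L| < kap x0 L) :
    ContDiffAt ℝ (⊤ : ℕ∞) (fun s => Real.arcsin ((s - L) / kap x0 L)) s := by
  obtain ⟨h1, h2⟩ := in_range x0 L s hk hs
  have h3 : ContDiffAt ℝ (⊤ : ℕ∞) (fun s : ℝ => (s - L) / kap x0 L) s := by fun_prop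
  exact ContDiffAt.comp (g := Real.arcsin) s (Real.contDiffAt_arcsin h1.ne' h2.ne) h3

lemma xc_neg (x0 L s : ℝ) : xc x0 L (2 * L - s) = - xc x0 L s := by
  unfold xc
  have : (2 * L - s - L) / kap x0 L = -((s - L) / kap x0 L) := by ring
  rw [this, Real.arcsin_neg, mul_neg, mul_neg, Real.sin_neg, Real.sin_neg]
  ring

lemma yc_neg (x0 L s : ℝ) : yc x0 L (2 * L - s) = yc x0 L s := by
  unfold yc
  have : (2 * L - s - L) / kap x0 L = -((s - L) / kap x0 L) := by ring
  rw [this, Real.arcsin_neg, mul_neg, mul_neg, Real.cos_neg, Real.cos_neg]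

theorem statement0 (x0 L : ℝ) (hx0 : 0 < x0) (hL : 3 * x0 < L) :
    (∀ s ∈ Set.Icc (0:ℝ) (2 * L),
        deriv (xc x0 L) s ^ 2 + deriv (yc x0 L) s ^ 2 = 1) ∧
    Admissible x0 L (xc x0 L) (yc x0 L) ∧
    VertSym L (xc x0 L) (yc x0 L) ∧
    deriv (yc x0 L) 0 = 0 ∧ deriv (yc x0 L) (2 * L) = 0 ∧
    (∀ s ∈ Set.Icc (0:ℝ) (2 * L), curv (xc x0 L) (yc x0 L) s = Hc x0 L s) ∧
    (∀ s ∈ Set.Icc (0:ℝ) (2 * L),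
        2 + deriv (deriv fun t => (Hc x0 L t ^ 2)⁻¹) s = 2 * L / (L + x0)) := by
  obtain ⟨h1, h2, hsq⟩ := sig_facts x0 L hx0 hL
  obtain ⟨hLk, hLs, hsin⟩ := kap_facts x0 L hx0 hL
  have hpi := Real.pi_pos
  have hL0 : 0 < L := by linarith
  have hk : 0 < kap x0 L := by linarith
  have h2' : sig x0 L < π := by linarith
  have hr : ∀ s ∈ Set.Icc (0:ℝ) (2 * L), |s - L| < kap x0 L := by
    intro s hs
    rw [abs_lt]; constructor <;> linarith [hs.1, hs.2]
  have hdx : ∀ s, |s - L| < kap x0 L →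
      deriv (xc x0 L) s = -Real.cos (π / sig x0 L * tht x0 L s) := fun s hs =>
    (hasDerivAt_xc x0 L s hk hs h1 h2').deriv
  have hdy : ∀ s, |s - L| < kap x0 L →
      deriv (yc x0 L) s = -Real.sin (π / sig x0 L * tht x0 L s) := fun s hs =>
    (hasDerivAt_yc x0 L s hk hs h1 h2').deriv
  have hunit : ∀ s ∈ Set.Icc (0:ℝ) (2 * L),
        deriv (xc x0 L) s ^ 2 + deriv (yc x0 L) s ^ 2 = 1 := by
    intro s hs
    rw [hdx s (hr s hs), hdy s (hr s hs), neg_sq, neg_sq, Real.cos_sq_add_sin_sq]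
  have hddx : ∀ s, |s - L| < kap x0 L → deriv (deriv (xc x0 L)) s =
      Real.sin (π / sig x0 L * tht x0 L s) *
        (π / sig x0 L * (1 / (kap x0 L * Real.cos (tht x0 L s)))) := by
    intro s hs
    have : deriv (xc x0 L) =ᶠ[nhds s] fun t => -Real.cos (π / sig x0 L * tht x0 L t) :=
      (ev_range _ L s hs).mono hdx
    rw [this.deriv_eq]
    have := (((hasDerivAt_tht x0 L s hk hs).const_mul (π / sig x0 L)).cos.neg).deriv
    simp only [neg_mul, neg_neg] at this
    exact this
  have hddy : ∀ s, |s - L| < kap x0 L → deriv (deriv (yc x0 L)) s =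
      -(Real.cos (π / sig x0 L * tht x0 L s) *
        (π / sig x0 L * (1 / (kap x0 L * Real.cos (tht x0 L s))))) := by
    intro s hs
    have : deriv (yc x0 L) =ᶠ[nhds s] fun t => -Real.sin (π / sig x0 L * tht x0 L t) :=
      (ev_range _ L s hs).mono hdy
    rw [this.deriv_eq]
    exact (((hasDerivAt_tht x0 L s hk hs).const_mul (π / sig x0 L)).sin.neg).deriv
  have hcurv : ∀ s ∈ Set.Icc (0:ℝ) (2 * L), curv (xc x0 L) (yc x0 L) s = Hc x0 L s := by
    intro s hs
    have hs' := hr s hs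
    have hc := cos_tht_pos x0 L s hk hs'
    unfold curv Hc
    rw [hunit s hs, hddx s hs', hddy s hs', hdx s hs', hdy s hs', ← cos_tht x0 L s hk]
    have := Real.cos_sq_add_sin_sq (π / sig x0 L * tht x0 L s)
    generalize π / sig x0 L * tht x0 L s = a at *
    rw [Real.sqrt_one, one_pow, div_one]
    have e : π / (sig x0 L * (kap x0 L * Real.cos (tht x0 L s))) =
      π / sig x0 L * (1 / (kap x0 L * Real.cos (tht x0 L s))) := by field_simp
    rw [e]
    linear_combination (π / sig x0 L * (1 / (kap x0 L * Real.cos (tht x0 L s)))) * this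
  have ht0 : tht x0 L 0 = - sig x0 L := by
    unfold tht
    have : (0 - L) / kap x0 L = -Real.sin (sig x0 L) := by
      rw [div_eq_iff hk.ne']; linarith
    rw [this, Real.arcsin_neg, Real.arcsin_sin (by linarith) h2.le]
  have ht2 : tht x0 L (2 * L) = sig x0 L := by
    unfold tht
    have : (2 * L - L) / kap x0 L = Real.sin (sig x0 L) := by
      rw [div_eq_iff hk.ne']; linarith
    rw [this, Real.arcsin_sin (by linarith) h2.le]
  have htL : tht x0 L L = 0 := by simp [tht]
  have hmono : ∀ s ∈ Set.Icc (0:ℝ) (2 * L), ∀ t ∈ Set.Icc (0:ℝ) (2 * L), s < t →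
      π / sig x0 L * tht x0 L s < π / sig x0 L * tht x0 L t := by
    intro s hs t ht hst
    apply mul_lt_mul_of_pos_left _ (by positivity)
    obtain ⟨a1, a2⟩ := in_range x0 L s hk (hr s hs)
    obtain ⟨b1, b2⟩ := in_range x0 L t hk (hr t ht)
    exact Real.arcsin_lt_arcsin a1.le (by gcongr) b2.le
  have hp0 : π / sig x0 L * tht x0 L 0 = -π := by rw [ht0]; field_simp
  have hp2 : π / sig x0 L * tht x0 L (2 * L) = π := by rw [ht2]; field_simp
  have hpL : π / sig x0 L * tht x0 L L = 0 := by rw [htL, mul_zero]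
  have m0 : (0:ℝ) ∈ Set.Icc (0:ℝ) (2 * L) := ⟨le_rfl, by linarith⟩
  have mL : L ∈ Set.Icc (0:ℝ) (2 * L) := ⟨by linarith, by linarith⟩
  have m2 : 2 * L ∈ Set.Icc (0:ℝ) (2 * L) := ⟨by linarith, le_rfl⟩
  have hps : sig x0 L ^ 2 * (L + x0) = π ^ 2 * x0 := by
    rw [hsq]; field_simp
  have x00 : xc x0 L 0 = x0 := by
    have h0 : Real.arcsin ((0 - L) / kap x0 L) = - sig x0 L := ht0
    unfold xc
    rw [h0]
    have a1 : (π + sig x0 L) / sig x0 L * -sig x0 L = -(sig x0 L + π) := by field_simp; ring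
    have a2 : (π - sig x0 L) / sig x0 L * -sig x0 L = -(π - sig x0 L) := by field_simp
    rw [a1, a2, Real.sin_neg, Real.sin_neg, Real.sin_add_pi, Real.sin_pi_sub]
    have n1 : π + sig x0 L ≠ 0 := by linarith
    have n2 : π - sig x0 L ≠ 0 := by linarith
    have : -(kap x0 L / 2) * (sig x0 L / (π + sig x0 L) * - -Real.sin (sig x0 L) +
      sig x0 L / (π - sig x0 L) * -Real.sin (sig x0 L)) =
      (kap x0 L * Real.sin (sig x0 L)) * sig x0 L ^ 2 / ((π + sig x0 L) * (π - sig x0 L)) := by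
      field_simp; ring
    rw [this, ← hLs, div_eq_iff (mul_ne_zero n1 n2)]
    linear_combination hps
  have y00 : yc x0 L 0 = 0 := by
    have h0 : Real.arcsin ((0 - L) / kap x0 L) = - sig x0 L := ht0
    unfold yc
    rw [h0]
    have a1 : (π + sig x0 L) / sig x0 L * -sig x0 L = -(sig x0 L + π) := by field_simp; ring
    have a2 : (π - sig x0 L) / sig x0 L * -sig x0 L = -(π - sig x0 L) := by field_simp
    rw [a1, a2, Real.cos_neg, Real.cos_neg, Real.cos_add_pi, Real.cos_pi_sub,
      Real.tan_eq_sin_div_cos]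
    have n1 : π + sig x0 L ≠ 0 := by linarith
    have n2 : π - sig x0 L ≠ 0 := by linarith
    have hcos : 0 < Real.cos (sig x0 L) := Real.cos_pos_of_mem_Ioo ⟨by linarith, h2⟩
    have : kap x0 L = L / Real.sin (sig x0 L) := rfl
    rw [this]
    field_simp
    linear_combination (-2 * π * Real.cos (sig x0 L)) * hps
  have x0L : xc x0 L L = 0 := by
    have := xc_neg x0 L L
    rw [show 2 * L - L = L by ring] at this
    linarith
  have hcx : ContinuousOn (xc x0 L) (Set.Icc 0 (2 * L)) := fun s hs =>
    (hasDerivAt_xc x0 L s hk (hr s hs) h1 h2').continuousAt.continuousWithinAt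
  have hcy : ContinuousOn (yc x0 L) (Set.Icc 0 (2 * L)) := fun s hs =>
    (hasDerivAt_yc x0 L s hk (hr s hs) h1 h2').continuousAt.continuousWithinAt
  have ymono : StrictMonoOn (yc x0 L) (Set.Icc 0 L) := by
    apply strictMonoOn_of_deriv_pos (convex_Icc _ _)
      (hcy.mono (Set.Icc_subset_Icc le_rfl (by linarith)))
    intro s hs
    rw [interior_Icc] at hs
    have ms : s ∈ Set.Icc (0:ℝ) (2 * L) := ⟨hs.1.le, by linarith [hs.2]⟩
    rw [hdy s (hr s ms)]
    have u1 := hmono 0 m0 s ms hs.1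
    have u2 := hmono s ms L mL hs.2
    rw [hp0] at u1
    rw [hpL] at u2
    linarith [Real.sin_neg_of_neg_of_neg_pi_lt u2 u1]
  have xpos : ∀ s, 0 ≤ s → s < L → 0 < xc x0 L s := by
    intro s hs0 hsL
    have ms : s ∈ Set.Icc (0:ℝ) (2 * L) := ⟨hs0, by linarith⟩
    by_cases hcase : -(π / 2) ≤ π / sig x0 L * tht x0 L s
    · have : StrictAntiOn (xc x0 L) (Set.Icc s L) := by
        apply strictAntiOn_of_deriv_neg (convex_Icc _ _)
          (hcx.mono (Set.Icc_subset_Icc hs0 (by linarith)))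
        intro t ht
        rw [interior_Icc] at ht
        have mt : t ∈ Set.Icc (0:ℝ) (2 * L) := ⟨by linarith [ht.1], by linarith [ht.2]⟩
        rw [hdx t (hr t mt)]
        have u1 := hmono s ms t mt ht.1
        have u2 := hmono t mt L mL ht.2
        rw [hpL] at u2
        have := Real.cos_pos_of_mem_Ioo (x := π / sig x0 L * tht x0 L t)
          ⟨by linarith, by linarith⟩
        linarith
      have := this (Set.left_mem_Icc.2 hsL.le) (Set.right_mem_Icc.2 hsL.le) hsL
      linarith
    · push Not at hcase
      have : MonotoneOn (xc x0 L) (Set.Icc 0 s) := by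
        have : StrictMonoOn (xc x0 L) (Set.Icc 0 s) := by
          apply strictMonoOn_of_deriv_pos (convex_Icc _ _)
            (hcx.mono (Set.Icc_subset_Icc le_rfl (by linarith)))
          intro t ht
          rw [interior_Icc] at ht
          have mt : t ∈ Set.Icc (0:ℝ) (2 * L) := ⟨by linarith [ht.1], by linarith [ht.2]⟩
          rw [hdx t (hr t mt)]
          have u1 := hmono 0 m0 t mt ht.1
          have u2 := hmono t mt s ms ht.2
          rw [hp0] at u1
          rw [← Real.cos_neg]
          have := Real.cos_neg_of_pi_div_two_lt_of_lt (x := -(π / sig x0 L * tht x0 L t))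
            (by linarith) (by linarith)
          linarith
        exact this.monotoneOn
      have := this (Set.left_mem_Icc.2 hs0) (Set.right_mem_Icc.2 hs0) hs0
      linarith
  have ypos1 : ∀ s, 0 < s → s ≤ L → 0 < yc x0 L s := by
    intro s hs0 hsL
    have := ymono ⟨le_rfl, hL0.le⟩ ⟨hs0.le, hsL⟩ hs0
    linarith
  have xneg : ∀ s, L < s → s ≤ 2 * L → xc x0 L s < 0 := by
    intro s a b
    have := xpos (2 * L - s) (by linarith) (by linarith)
    rw [xc_neg] at this
    linarith
  have hinj : Set.InjOn (fun s => (xc x0 L s, yc x0 L s)) (Set.Icc 0 (2 * L)) := by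
    intro s hs t ht hst
    simp only [Prod.mk.injEq] at hst
    obtain ⟨e1, e2⟩ := hst
    rcases lt_trichotomy s L with a | a | a <;> rcases lt_trichotomy t L with b | b | b
    · exact ymono.injOn ⟨hs.1, a.le⟩ ⟨ht.1, b.le⟩ e2
    · subst b; linarith [xpos s hs.1 a]
    · linarith [xpos s hs.1 a, xneg t b ht.2]
    · rw [a] at e1; linarith [xpos t ht.1 b]
    · rw [a, b]
    · rw [a] at e1; linarith [xneg t b ht.2]
    · linarith [xpos t ht.1 b, xneg s a hs.2]
    · rw [b] at e1; linarith [xneg s a hs.2]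
    · rw [← yc_neg x0 L s, ← yc_neg x0 L t] at e2
      have := ymono.injOn ⟨by linarith [hs.2], by linarith⟩ ⟨by linarith [ht.2], by linarith⟩ e2
      linarith
  have hHpos : ∀ s ∈ Set.Icc (0:ℝ) (2 * L), 0 < Hc x0 L s := by
    intro s hs
    unfold Hc
    rw [← cos_tht x0 L s hk]
    have := cos_tht_pos x0 L s hk (hr s hs)
    positivity
  refine ⟨hunit, ⟨?_, ?_, ?_, hinj, ?_, x00, y00, ?_, ?_, ?_⟩, ?_, ?_, ?_, hcurv, ?_⟩
  · intro s hs
    have := contDiffAt_tht x0 L s hk (hr s hs)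
    apply ContDiffAt.contDiffWithinAt
    unfold xc
    fun_prop
  · intro s hs
    have := contDiffAt_tht x0 L s hk (hr s hs)
    apply ContDiffAt.contDiffWithinAt
    unfold yc
    fun_prop
  · intro s hs
    rw [hunit s hs]; simp
  · intro s hs
    rw [hcurv s hs]; exact hHpos s hs
  · have := xc_neg x0 L 0
    rw [sub_zero, x00] at this
    exact this
  · have := yc_neg x0 L 0
    rw [sub_zero, y00] at this
    exact this
  · intro s hs
    rcases le_total s L with a | a
    · exact ypos1 s hs.1 a
    · rw [← yc_neg]; exact ypos1 _ (by linarith [hs.2]) (by linarith)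
  · intro s _
    exact ⟨xc_neg x0 L s, yc_neg x0 L s⟩
  · rw [hdy 0 (hr 0 m0), hp0]; simp
  · rw [hdy _ (hr _ m2), hp2]; simp
  · intro s hs
    have hH : ∀ t, |t - L| < kap x0 L →
        (Hc x0 L t ^ 2)⁻¹ = x0 / (L + x0) * (kap x0 L ^ 2 - (t - L) ^ 2) := by
      intro t ht
      have hnn : 0 ≤ kap x0 L ^ 2 - (t - L) ^ 2 := by
        have := sq_lt_sq' (abs_lt.1 ht).1 (abs_lt.1 ht).2
        linarith
      unfold Hc
      rw [div_pow, inv_div, mul_pow, Real.sq_sqrt hnn, hsq]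
      field_simp
    have hd1 : ∀ t, |t - L| < kap x0 L →
        deriv (fun t => (Hc x0 L t ^ 2)⁻¹) t = x0 / (L + x0) * (-(2 * (t - L))) := by
      intro t ht
      have e : (fun t => (Hc x0 L t ^ 2)⁻¹) =ᶠ[nhds t]
          fun t => x0 / (L + x0) * (kap x0 L ^ 2 - (t - L) ^ 2) :=
        (ev_range _ L t ht).mono hH
      rw [e.deriv_eq]
      have := (((((hasDerivAt_id t).sub_const L).pow 2).const_sub (kap x0 L ^ 2)).const_mul
        (x0 / (L + x0))).deriv
      simp at this
      simpa using this
    have e : deriv (fun t => (Hc x0 L t ^ 2)⁻¹) =ᶠ[nhds s]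
        fun t => x0 / (L + x0) * (-(2 * (t - L))) :=
      (ev_range _ L s (hr s hs)).mono hd1
    rw [e.deriv_eq]
    have := (((((hasDerivAt_id s).sub_const L).const_mul 2).neg).const_mul
        (x0 / (L + x0))).deriv
    have e3 : deriv (fun t => x0 / (L + x0) * (-(2 * (t - L)))) s = x0 / (L + x0) * (-(2 * 1)) :=
      this
    rw [e3]
    field_simp
    ring
end

section
/- Let x₀ > 0 and L > 0, and suppose γ = (x,y) : [0,2L] → ℝ² is a vertically symmetric admissible curve parametrized by arc-length (|γ̇| ≡ 1) with ẏ(0) = ẏ(2L) = 0, whose curvature H(s) = ⟨γ̇(s), γ̈(s)^⊥⟩ satisfies 2 + (d²/ds²)(H(s)⁻²) = λ on [0,2L] for some λ > 0. Then necessarily 3x₀ < L, λ = 2L/(L+x₀), and, with σ = π√(x₀/(L+x₀)) and κ = L/sin σ, the curve is given explicitly by x(s) = −(κ/2)[(σ/(π+σ))·sin(((π+σ)/σ)·arcsin((s−L)/κ)) + (σ/(π−σ))·sin(((π−σ)/σ)·arcsin((s−L)/κ))] and y(s) = (κ/2)[(σ/(π+σ))·cos(((π+σ)/σ)·arcsin((s−L)/κ))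 + (σ/(π−σ))·cos(((π−σ)/σ)·arcsin((s−L)/κ))] + πx₀/(σ tan σ). -/
open Real Set

lemma const_of_deriv {a b : ℝ} {f : ℝ → ℝ} (hc : ContinuousOn f (Icc a b))
    (hd : ∀ s ∈ Ioo a b, HasDerivAt f 0 s) : ∀ s ∈ Icc a b, ∀ t ∈ Icc a b, f s = f t := by
  have h1 : MonotoneOn f (Icc a b) := by
    apply monotoneOn_of_deriv_nonneg (convex_Icc a b) hc
    · intro s hs
      rw [interior_Icc] at hs
      exact (hd s hs).differentiableAt.differentiableWithinAt
    · intro s hs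
      rw [interior_Icc] at hs
      rw [(hd s hs).deriv]
  have h2 : AntitoneOn f (Icc a b) := by
    apply antitoneOn_of_deriv_nonpos (convex_Icc a b) hc
    · intro s hs
      rw [interior_Icc] at hs
      exact (hd s hs).differentiableAt.differentiableWithinAt
    · intro s hs
      rw [interior_Icc] at hs
      rw [(hd s hs).deriv]
  intro s hs t ht
  rcases le_total s t with h | h
  · exact le_antisymm (h1 hs ht h) (h2 hs ht h)
  · exact le_antisymm (h2 ht hs h) (h1 ht hs h)

set_option maxHeartbeats 1000000 in
lemma core (x0 L A B : ℝ) (hx0 : 0 < x0) (hL : 0 < L) (hB1 : B < 1)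
    (u v P Q : ℝ → ℝ)
    (hcu : ContinuousOn u (Icc 0 (2 * L))) (hcv : ContinuousOn v (Icc 0 (2 * L)))
    (hcP : ContinuousOn P (Icc 0 (2 * L))) (hcQ : ContinuousOn Q (Icc 0 (2 * L)))
    (hpos : ∀ s ∈ Icc 0 (2 * L), 0 < A - B * (s - L) ^ 2)
    (hu : ∀ s ∈ Ioo 0 (2 * L), HasDerivAt u (P s) s)
    (hv : ∀ s ∈ Ioo 0 (2 * L), HasDerivAt v (Q s) s)
    (hP : ∀ s ∈ Ioo 0 (2 * L), HasDerivAt P (-(Q s / √(A - B * (s - L) ^ 2))) s)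
    (hQ : ∀ s ∈ Ioo 0 (2 * L), HasDerivAt Q (P s / √(A - B * (s - L) ^ 2)) s)
    (hPL : P L ^ 2 = 1) (hP0 : P 0 = 1) (hQ0 : Q 0 = 0) (hu0 : u 0 = x0) (hv0 : v 0 = 0)
    (huL : u L = 0) (hQL : Q L = 0) (hne : ∀ s ∈ Ioo 0 L, u s ≠ 0) :
    3 * x0 < L ∧ B = x0 / (L + x0) ∧
    ∀ s ∈ Icc 0 (2 * L), u s = xc x0 L s ∧ v s = yc x0 L s := by
  have m0 : (0:ℝ) ∈ Icc 0 (2 * L) := ⟨le_rfl, by linarith⟩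
  have mL : L ∈ Icc 0 (2 * L) := ⟨hL.le, by linarith⟩
  have hgd : ∀ s ∈ Icc 0 (2 * L), HasDerivAt (fun s => √(A - B * (s - L) ^ 2))
      (-(B * (s - L)) / √(A - B * (s - L) ^ 2)) s := by
    intro s hs
    have h1 : HasDerivAt (fun s => A - B * (s - L) ^ 2) (-(B * (2 * (s - L)))) s := by
      have := ((((hasDerivAt_id s).sub_const L).pow 2).const_mul B).const_sub A
      refine this.congr_deriv ?_
      simp
    have h2 := h1.sqrt (hpos s hs).ne'
    convert h2 using 1
    have := (sqrt_pos.2 (hpos s hs)).ne'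
    field_simp
  have hgc : ContinuousOn (fun s => √(A - B * (s - L) ^ 2)) (Icc 0 (2 * L)) :=
    fun s hs => (hgd s hs).continuousAt.continuousWithinAt
  set g : ℝ → ℝ := fun s => √(A - B * (s - L) ^ 2) with hg
  have hgp : ∀ s ∈ Icc 0 (2 * L), 0 < g s := fun s hs => sqrt_pos.2 (hpos s hs)
  have hlin : ∀ s, HasDerivAt (fun s : ℝ => B * (s - L)) B s := by
    intro s
    simpa using ((hasDerivAt_id s).sub_const L).const_mul B
  have E1 : ∀ s ∈ Icc 0 (2 * L), (1 - B) * u s = g s * Q s - B * (s - L) * P s := by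
    have key := const_of_deriv (a := 0) (b := 2 * L)
      (f := fun s => g s * Q s - B * (s - L) * P s - (1 - B) * u s)
      (((hgc.mul hcQ).sub ((by fun_prop : ContinuousOn (fun s : ℝ => B * (s - L)) _).mul hcP)).sub
        (continuousOn_const.mul hcu)) ?_
    · intro s hs
      have := key s hs L mL
      simp only [huL, hQL] at this
      linarith
    · intro s hs
      have hs' := Ioo_subset_Icc_self hs
      have := (((hgd s hs').mul (hQ s hs)).sub ((hlin s).mul (hP s hs))).sub ((hu s hs).const_mul (1 - B))
      refine this.congr_deriv ?_
      have := (hgp s hs').ne'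
      change -(B * (s - L)) / g s * Q s + g s * (P s / g s) - (B * P s + B * (s-L) * (-(Q s / g s))) - (1 - B) * P s = _
      field_simp
      ring
  have E2 : ∀ s ∈ Icc 0 (2 * L), (1 - B) * v s = - g s * P s - B * (s - L) * Q s + g 0 := by
    have key := const_of_deriv (a := 0) (b := 2 * L)
      (f := fun s => g s * P s + B * (s - L) * Q s + (1 - B) * v s)
      (((hgc.mul hcP).add ((by fun_prop : ContinuousOn (fun s : ℝ => B * (s - L)) _).mul hcQ)).add
        (continuousOn_const.mul hcv)) ?_
    · intro s hs
      have := key s hs 0 m0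
      simp only [hP0, hQ0, hv0] at this
      linarith
    · intro s hs
      have hs' := Ioo_subset_Icc_self hs
      have := (((hgd s hs').mul (hP s hs)).add ((hlin s).mul (hQ s hs))).add ((hv s hs).const_mul (1 - B))
      refine this.congr_deriv ?_
      have := (hgp s hs').ne'
      change -(B * (s - L)) / g s * P s + g s * (-(Q s / g s)) + (B * Q s + B * (s-L) * ((P s / g s))) + (1 - B) * Q s = _
      field_simp
      ring
  have hBx : B * L = (1 - B) * x0 := by
    have := E1 0 m0
    rw [hu0, hQ0, hP0] at this
    linarith
  have hBe : B = x0 / (L + x0) := by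
    rw [eq_div_iff (by positivity)]; linarith
  have hB0 : 0 < B := by rw [hBe]; positivity
  obtain ⟨b, hbp, hbB⟩ : ∃ b, 0 < b ∧ b ^ 2 = B := ⟨√B, sqrt_pos.2 hB0, sq_sqrt hB0.le⟩
  have hsig : sig x0 L = π * b := by
    rw [sig, ← hBe, ← hbB, sqrt_sq hbp.le]
  have hAL : B * L ^ 2 < A := by
    have := hpos 0 m0
    nlinarith
  have hA0 : 0 < A := lt_of_le_of_lt (by positivity) hAL
  obtain ⟨k, hkp, hkA⟩ : ∃ k, 0 < k ∧ B * k ^ 2 = A :=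
    ⟨√(A / B), sqrt_pos.2 (by positivity), by rw [sq_sqrt (by positivity)]; field_simp⟩
  have hkL : L < k := by
    have : L ^ 2 < k ^ 2 := by
      rw [← hkA] at hAL
      exact lt_of_mul_lt_mul_left hAL hB0.le
    exact lt_of_pow_lt_pow_left₀ 2 hkp.le this
  set ψ : ℝ → ℝ := fun s => arcsin ((s - L) / k) with hψ
  have hrange : ∀ s ∈ Icc 0 (2 * L), -1 < (s - L) / k ∧ (s - L) / k < 1 := by
    intro s hs
    constructor
    · rw [lt_div_iff₀ hkp]; linarith [hs.1]
    · rw [div_lt_iff₀ hkp]; linarith [hs.2]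
  have hsψ : ∀ s ∈ Icc 0 (2 * L), k * sin (ψ s) = s - L := by
    intro s hs
    rw [hψ]
    simp only
    rw [sin_arcsin (hrange s hs).1.le (hrange s hs).2.le]
    field_simp
  have hcψ : ∀ s ∈ Icc 0 (2 * L), b * (k * cos (ψ s)) = g s := by
    intro s hs
    rw [hψ, hg]
    simp only
    rw [cos_arcsin]
    symm
    rw [sqrt_eq_iff_mul_self_eq (hpos s hs).le (by positivity)]
    have : 0 ≤ 1 - ((s - L) / k) ^ 2 := by nlinarith [hrange s hs]
    have h2 := sq_sqrt this
    have h3 : b * (k * √(1 - ((s - L) / k) ^ 2)) * (b * (k * √(1 - ((s - L) / k) ^ 2))) =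
      b ^ 2 * k ^ 2 * √(1 - ((s - L) / k) ^ 2) ^ 2 := by ring
    rw [h3, h2, hbB, ← hkA]
    field_simp
  have hφd : ∀ s ∈ Icc 0 (2 * L), HasDerivAt (fun s => ψ s / b) (1 / g s) s := by
    intro s hs
    have h1 := (hasDerivAt_arcsin (hrange s hs).1.ne' (hrange s hs).2.ne).comp s
      (((hasDerivAt_id s).sub_const L).div_const k)
    have h2 := h1.div_const b
    refine h2.congr_deriv ?_
    rw [← hcψ s hs, hψ]
    simp only [cos_arcsin, id]
    field_simp
  set φ : ℝ → ℝ := fun s => ψ s / b with hφ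
  have hφc : ContinuousOn φ (Icc 0 (2 * L)) :=
    fun s hs => (hφd s hs).continuousAt.continuousWithinAt
  have hφL : φ L = 0 := by simp [hφ, hψ]
  have D1 : ∀ s ∈ Icc 0 (2 * L), P s * cos (φ s) + Q s * sin (φ s) = P L := by
    have key := const_of_deriv (a := 0) (b := 2 * L)
      (f := fun s => P s * cos (φ s) + Q s * sin (φ s))
      ((hcP.mul (continuous_cos.comp_continuousOn hφc)).add (hcQ.mul (continuous_sin.comp_continuousOn hφc))) ?_
    · intro s hs
      have := key s hs L mL
      simpa [hφL, hQL] using this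
    · intro s hs
      have hs' := Ioo_subset_Icc_self hs
      have := ((hP s hs).mul (hφd s hs').cos).add ((hQ s hs).mul (hφd s hs').sin)
      refine this.congr_deriv ?_
      change -(Q s / g s) * _ + _ + (P s / g s * _ + _) = _
      ring
  have D2 : ∀ s ∈ Icc 0 (2 * L), Q s * cos (φ s) - P s * sin (φ s) = 0 := by
    have key := const_of_deriv (a := 0) (b := 2 * L)
      (f := fun s => Q s * cos (φ s) - P s * sin (φ s))
      ((hcQ.mul (continuous_cos.comp_continuousOn hφc)).sub (hcP.mul (continuous_sin.comp_continuousOn hφc))) ?_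
    · intro s hs
      have := key s hs L mL
      simpa [hφL, hQL] using this
    · intro s hs
      have hs' := Ioo_subset_Icc_self hs
      have := ((hQ s hs).mul (hφd s hs').cos).sub ((hP s hs).mul (hφd s hs').sin)
      refine this.congr_deriv ?_
      change (P s / g s) * _ + _ - (-(Q s / g s) * _ + _) = _
      ring
  have hPs : ∀ s ∈ Icc 0 (2 * L), P s = P L * cos (φ s) := by
    intro s hs
    linear_combination cos (φ s) * D1 s hs - sin (φ s) * D2 s hs - P s * sin_sq_add_cos_sq (φ s)
  have hQs : ∀ s ∈ Icc 0 (2 * L), Q s = P L * sin (φ s) := by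
    intro s hs
    linear_combination sin (φ s) * D1 s hs + cos (φ s) * D2 s hs - Q s * sin_sq_add_cos_sq (φ s)
  have hPL0 : P L ≠ 0 := by intro h; rw [h] at hPL; norm_num at hPL
  have hφ0neg : φ 0 < 0 := by
    have : ψ 0 < 0 := by
      rw [hψ]; simp only
      rw [arcsin_lt_zero]
      apply div_neg_of_neg_of_pos _ hkp
      linarith
    exact div_neg_of_neg_of_pos this hbp
  have hsin0 : sin (φ 0) = 0 := by
    have := hQs 0 m0
    rw [hQ0] at this
    rcases mul_eq_zero.1 this.symm with h | h
    · exact absurd h hPL0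
    · exact h
  have hgt : -(3 * π / 2) < φ 0 := by
    by_contra hcon
    push Not at hcon
    have hpi := pi_pos
    obtain ⟨t, ht, hts⟩ : ∃ t ∈ Icc 0 L, P L * sin (φ t) = -1 := by
      have hivt := intermediate_value_Icc hL.le (hφc.mono (Icc_subset_Icc_right (by linarith : L ≤ 2 * L)))
      rw [hφL] at hivt
      have h12 : P L = 1 ∨ P L = -1 := by
        rcases mul_eq_zero.1 (show (P L - 1) * (P L + 1) = 0 by linear_combination hPL) with h | h
        · left; linarith
        · right; linarith
      rcases h12 with h | h
      · obtain ⟨t, ht, e⟩ := hivt (show -(π / 2) ∈ Icc (φ 0) 0 from ⟨by linarith, by linarith⟩)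
        exact ⟨t, ht, by rw [e, h, sin_neg, sin_pi_div_two]; norm_num⟩
      · obtain ⟨t, ht, e⟩ := hivt (show -(3 * π / 2) ∈ Icc (φ 0) 0 from ⟨by linarith, by linarith⟩)
        refine ⟨t, ht, ?_⟩
        rw [e, h, sin_neg, show 3 * π / 2 = π / 2 + π by ring, sin_add_pi, sin_pi_div_two]; norm_num
    have ht' : t ∈ Icc 0 (2 * L) := ⟨ht.1, by linarith [ht.2]⟩
    have hcost : P t = 0 := by
      have h1 := hPs t ht'
      have h2 := sin_sq_add_cos_sq (φ t)
      have : P t ^ 2 = 0 := by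
        rw [h1]
        linear_combination (P L) ^ 2 * h2 - (P L * sin (φ t) - 1) * hts + hPL
      exact pow_eq_zero_iff (two_ne_zero) |>.1 this
    have hut : u t < 0 := by
      have h1 := E1 t ht'
      rw [hQs t ht', hts, hcost] at h1
      have h2 := hgp t ht'
      have h3 : 0 < 1 - B := by linarith
      by_contra hc
      push Not at hc
      nlinarith [mul_nonneg h3.le hc]
    obtain ⟨r, hr, hr0⟩ := intermediate_value_Icc' ht.1 (hcu.mono (Icc_subset_Icc_right ht'.2))
      (show (0:ℝ) ∈ Icc (u t) (u 0) from ⟨hut.le, by rw [hu0]; exact hx0.le⟩)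
    refine hne r ⟨lt_of_le_of_ne hr.1 ?_, lt_of_lt_of_le (lt_of_le_of_ne hr.2 ?_) ht.2⟩ hr0
    · rintro rfl
      rw [hu0] at hr0; exact hx0.ne' hr0
    · rintro rfl
      exact hut.ne hr0
  have hφ0 : φ 0 = -π := by
    obtain ⟨n, hn⟩ := sin_eq_zero_iff.1 hsin0
    have hpi := pi_pos
    rw [← hn] at hgt hφ0neg ⊢
    have h1 : (n:ℝ) < 0 := by
      by_contra hc
      push Not at hc
      nlinarith [mul_nonneg hc hpi.le]
    have h2 : (-2:ℝ) < n := by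
      by_contra hc
      push Not at hc
      nlinarith [mul_le_mul_of_nonneg_right hc hpi.le]
    have h1' : n < 0 := by exact_mod_cast h1
    have h2' : -2 < n := by exact_mod_cast h2
    have : n = -1 := by omega
    rw [this]; simp
  have hPLe : P L = -1 := by
    have := hPs 0 m0
    rw [hP0, hφ0, cos_neg, cos_pi] at this
    linarith
  have hψ0 : arcsin (L / k) = π * b := by
    have h1 : ψ 0 = -π * b := by
      rw [← hφ0, hφ]; field_simp
    have h2 : ψ 0 = - arcsin (L / k) := by
      rw [hψ, ← arcsin_neg]; simp only
      congr 1; ring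
    linarith
  have hLk1 : L / k < 1 := by rw [div_lt_one hkp]; exact hkL
  have hLk0 : 0 < L / k := by positivity
  have hsin : sin (π * b) = L / k := by
    rw [← hψ0, sin_arcsin (by linarith) hLk1.le]
  have hkap : kap x0 L = k := by
    rw [kap, hsig, hsin]; field_simp
  have hlt : π * b < π / 2 := by rw [← hψ0]; exact arcsin_lt_pi_div_two.2 hLk1
  have hb2 : b < 1 / 2 := by
    have : π * b < π * (1 / 2) := by linarith
    exact lt_of_mul_lt_mul_left this pi_pos.le
  have hx3 : 3 * x0 < L := by
    have h1 : B < 1 / 4 := by rw [← hbB]; nlinarith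
    rw [hBe, div_lt_iff₀ (by positivity)] at h1
    linarith
  have hcos : 0 < cos (π * b) := cos_pos_of_mem_Ioo ⟨by linarith [pi_pos, mul_pos pi_pos hbp], hlt⟩
  have hg0 : g 0 = b * (k * cos (π * b)) := by
    rw [← hcψ 0 m0]
    have : ψ 0 = -(π * b) := by
      rw [← hψ0, hψ, ← arcsin_neg]; simp only
      congr 1; ring
    rw [this, cos_neg]
  refine ⟨hx3, hBe, fun s hs => ?_⟩
  have e1 : (π + π * b) / (π * b) * arcsin ((s - L) / k) = φ s + ψ s := by
    rw [hφ, hψ]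
    have := pi_pos.ne'
    field_simp
  have e2 : (π - π * b) / (π * b) * arcsin ((s - L) / k) = φ s - ψ s := by
    rw [hφ, hψ]
    have := pi_pos.ne'
    field_simp
  have e3 : π * b / (π + π * b) = b / (1 + b) := by
    have := pi_pos.ne'
    field_simp
  have e4 : π * b / (π - π * b) = b / (1 - b) := by
    have := pi_pos.ne'
    rw [show π - π * b = π * (1 - b) by ring, mul_div_mul_left _ _ this]
  have n1 : (1 + b) ≠ 0 := by positivity
  have n2 : (1 - b) ≠ 0 := by linarith
  have n3 : 1 - B ≠ 0 := by linarith
  have hu' := E1 s hs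
  have hv' := E2 s hs
  rw [hPs s hs, hQs s hs, hPLe, ← hcψ s hs, ← hsψ s hs] at hu' hv'
  rw [xc, yc, hsig, hkap, e1, e2, e3, e4, sin_add, sin_sub, cos_add, cos_sub]
  have hBb : 1 - B = (1 + b) * (1 - b) := by rw [← hbB]; ring
  constructor
  · apply mul_left_cancel₀ n3
    rw [hu', hBb, ← hbB]
    field_simp
    ring
  · apply mul_left_cancel₀ n3
    have hconst : (1 - B) * (π * x0 / (π * b * tan (π * b))) = g 0 := by
      rw [hg0, tan_eq_sin_div_cos, hsin]
      have := pi_pos.ne'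
      field_simp
      rw [hbB]; linarith
    rw [mul_add, hconst, hv', hBb, ← hbB]
    field_simp
    ring

lemma const_open {a b : ℝ} {f : ℝ → ℝ}
    (hd : ∀ s ∈ Ioo a b, HasDerivAt f 0 s) : ∀ s ∈ Ioo a b, ∀ t ∈ Ioo a b, f s = f t := by
  intro s hs t ht
  exact isOpen_Ioo.is_const_of_deriv_eq_zero isPreconnected_Ioo
    (fun s hs => (hd s hs).differentiableAt.differentiableWithinAt)
    (fun s hs => (hd s hs).deriv) hs ht

lemma sym_deriv {L c : ℝ} {f f' : ℝ → ℝ} (hd : ∀ s ∈ Ioo 0 (2 * L), HasDerivAt f (f' s) s)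
    (hs : ∀ s ∈ Ioo 0 (2 * L), f (2 * L - s) = c * f s) :
    ∀ s ∈ Ioo 0 (2 * L), f' (2 * L - s) = -c * f' s := by
  intro s hs'
  have hm : 2 * L - s ∈ Ioo 0 (2 * L) := ⟨by linarith [hs'.2], by linarith [hs'.1]⟩
  have h1 : HasDerivAt (fun s => f (2 * L - s)) (f' (2 * L - s) * (-1)) s :=
    (hd _ hm).comp s ((hasDerivAt_id s).const_sub (2 * L))
  have h2 : HasDerivAt (fun s => f (2 * L - s)) (c * f' s) s := by
    refine ((hd s hs').const_mul c).congr_of_eventuallyEq ?_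
    filter_upwards [isOpen_Ioo.mem_nhds hs'] with t ht
    exact hs t ht
  have := h1.unique h2
  linarith

lemma reg {L : ℝ} (hL : 0 < L) {f : ℝ → ℝ} (hf : ContDiffOn ℝ (⊤ : ℕ∞) f (Icc 0 (2 * L))) :
    ContDiffOn ℝ (⊤ : ℕ∞) (derivWithin f (Icc 0 (2 * L))) (Icc 0 (2 * L)) ∧
    ∀ s ∈ Ioo 0 (2 * L), HasDerivAt f (derivWithin f (Icc 0 (2 * L)) s) s := by
  have hud : UniqueDiffOn ℝ (Icc 0 (2 * L)) := uniqueDiffOn_Icc (by linarith)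
  have h := (contDiffOn_infty_iff_derivWithin hud).1 hf
  refine ⟨h.2, fun s hs => ?_⟩
  exact (h.1 s (Ioo_subset_Icc_self hs)).hasDerivWithinAt.hasDerivAt (Icc_mem_nhds hs.1 hs.2)

/-- rigidity of vertically symmetric, arc-length admissible solutions of the
Euler–Lagrange equation `2 + (H⁻²)'' = λ` with tangential boundary contact.
Here, since the curve is parametrized by arc-length, its curvature is
`H = u̇ v̈ − v̇ ü = ⟨γ̇, γ̈^⊥⟩`. -/
theorem statement1 (x0 L lam : ℝ) (hx0 : 0 < x0) (hL : 0 < L) (hlam : 0 < lam)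
    (u v : ℝ → ℝ)
    (hadm : Admissible x0 L u v)
    (hsym : VertSym L u v)
    (harc : ∀ s ∈ Set.Icc (0:ℝ) (2 * L), deriv u s ^ 2 + deriv v s ^ 2 = 1)
    (hv0 : deriv v 0 = 0) (hv2L : deriv v (2 * L) = 0)
    (hEL : ∀ s ∈ Set.Icc (0:ℝ) (2 * L),
        2 + deriv (deriv fun t =>
            ((deriv u t * deriv (deriv v) t - deriv v t * deriv (deriv u) t) ^ 2)⁻¹) s = lam) :
    3 * x0 < L ∧ lam = 2 * L / (L + x0) ∧
    ∀ s ∈ Set.Icc (0:ℝ) (2 * L), u s = xc x0 L s ∧ v s = yc x0 L s := by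
  obtain ⟨cu, cv, -, hinj, hcurv, hu0, hv0', -, -, hvpos⟩ := hadm
  obtain ⟨cP, hu⟩ := reg hL cu
  obtain ⟨cQ, hv⟩ := reg hL cv
  have hPdef : ∀ x, DifferentiableAt ℝ u x → x ∈ Icc 0 (2 * L) → derivWithin u (Icc 0 (2 * L)) x = deriv u x :=
    fun x hx hxm => hx.derivWithin (uniqueDiffOn_Icc (by linarith) x hxm)
  obtain ⟨cP1, hP⟩ := reg hL cP
  obtain ⟨cQ1, hQ⟩ := reg hL cQ
  generalize derivWithin u (Icc 0 (2 * L)) = P at *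
  generalize derivWithin v (Icc 0 (2 * L)) = Q at *
  generalize derivWithin P (Icc 0 (2 * L)) = P1 at *
  generalize derivWithin Q (Icc 0 (2 * L)) = Q1 at *
  have m0 : (0:ℝ) ∈ Icc 0 (2 * L) := ⟨le_rfl, by linarith⟩
  have mL : L ∈ Ioo 0 (2 * L) := ⟨hL, by linarith⟩
  have du : ∀ s ∈ Ioo 0 (2 * L), deriv u s = P s := fun s hs => (hu s hs).deriv
  have dv : ∀ s ∈ Ioo 0 (2 * L), deriv v s = Q s := fun s hs => (hv s hs).deriv
  have ddu : ∀ s ∈ Ioo 0 (2 * L), deriv (deriv u) s = P1 s := by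
    intro s hs
    rw [← (hP s hs).deriv]
    apply Filter.EventuallyEq.deriv_eq
    filter_upwards [isOpen_Ioo.mem_nhds hs] with t ht using du t ht
  have ddv : ∀ s ∈ Ioo 0 (2 * L), deriv (deriv v) s = Q1 s := by
    intro s hs
    rw [← (hQ s hs).deriv]
    apply Filter.EventuallyEq.deriv_eq
    filter_upwards [isOpen_Ioo.mem_nhds hs] with t ht using dv t ht
  have hclos : Icc 0 (2 * L) ⊆ closure (Ioo 0 (2 * L)) := by
    rw [closure_Ioo (by linarith)]
  have hone' : ∀ s ∈ Ioo 0 (2 * L), P s ^ 2 + Q s ^ 2 = 1 := by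
    intro s hs
    rw [← du s hs, ← dv s hs]
    exact harc s (Ioo_subset_Icc_self hs)
  have hone : ∀ s ∈ Icc 0 (2 * L), P s ^ 2 + Q s ^ 2 = 1 := by
    have : EqOn (fun s => P s ^ 2 + Q s ^ 2) (fun _ => 1) (Icc 0 (2 * L)) :=
      Set.EqOn.of_subset_closure (s := Ioo 0 (2 * L)) hone'
        ((cP.continuousOn.pow 2).add (cQ.continuousOn.pow 2)) continuousOn_const
        Ioo_subset_Icc_self hclos
    exact this
  have horth : ∀ s ∈ Ioo 0 (2 * L), P s * P1 s + Q s * Q1 s = 0 := by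
    intro s hs
    have h1 := ((hP s hs).pow 2).add ((hQ s hs).pow 2)
    have h2 : HasDerivAt (fun _ : ℝ => (1:ℝ)) 0 s := hasDerivAt_const s 1
    have h3 := h2.congr_of_eventuallyEq (f₁ := P ^ 2 + Q ^ 2) (by
      filter_upwards [isOpen_Ioo.mem_nhds hs] with t ht using hone' t ht)
    have := h1.unique h3
    simp at this
    linarith
  set K : ℝ → ℝ := fun s => P s * Q1 s - Q s * P1 s with hK
  have cK : ContDiffOn ℝ (⊤ : ℕ∞) K (Icc 0 (2 * L)) := (cP.mul cQ1).sub (cQ.mul cP1)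
  have hKpos : ∀ s ∈ Ioo 0 (2 * L), 0 < K s := by
    intro s hs
    have := hcurv s (Ioo_subset_Icc_self hs)
    rw [curv, harc s (Ioo_subset_Icc_self hs), du s hs, dv s hs, ddu s hs, ddv s hs] at this
    simpa [hK] using this
  have hP1 : ∀ s ∈ Ioo 0 (2 * L), P1 s = -(Q s * K s) := by
    intro s hs
    simp only [hK]
    linear_combination P s * horth s hs - P1 s * hone' s hs
  have hQ1 : ∀ s ∈ Ioo 0 (2 * L), Q1 s = P s * K s := by
    intro s hs
    simp only [hK]
    linear_combination Q s * horth s hs - Q1 s * hone' s hs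
  -- symmetry
  have sP : ∀ s ∈ Ioo 0 (2 * L), P (2 * L - s) = 1 * P s := by
    have := sym_deriv (c := -1) hu (fun s hs => by
      rw [(hsym s (Ioo_subset_Icc_self hs)).1]; ring)
    simpa using this
  have sQ : ∀ s ∈ Ioo 0 (2 * L), Q (2 * L - s) = (-1) * Q s := by
    exact sym_deriv (c := 1) hv (fun s hs => by
      rw [(hsym s (Ioo_subset_Icc_self hs)).2]; ring)
  have sP1 := sym_deriv hP sP
  have sQ1 := sym_deriv hQ sQ
  have sK : ∀ s ∈ Ioo 0 (2 * L), K (2 * L - s) = K s := by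
    intro s hs
    simp only [hK]
    rw [sP s hs, sQ s hs, sP1 s hs, sQ1 s hs]; ring
  set h : ℝ → ℝ := fun s => (K s ^ 2)⁻¹ with hh
  have ch : ContDiffOn ℝ (⊤ : ℕ∞) h (Ioo 0 (2 * L)) := by
    apply ContDiffOn.inv ((cK.mono Ioo_subset_Icc_self).pow 2)
    intro s hs
    exact (pow_pos (hKpos s hs) 2).ne'
  have ch' := (contDiffOn_infty_iff_deriv_of_isOpen isOpen_Ioo).1 ch
  have ch2 := (contDiffOn_infty_iff_deriv_of_isOpen isOpen_Ioo).1 ch'.2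
  have dh : ∀ s ∈ Ioo 0 (2 * L), HasDerivAt h (deriv h s) s := fun s hs =>
    ((ch'.1 s hs).differentiableAt (isOpen_Ioo.mem_nhds hs)).hasDerivAt
  have ddh : ∀ s ∈ Ioo 0 (2 * L), HasDerivAt (deriv h) (lam - 2) s := by
    intro s hs
    have h1 := ((ch2.1 s hs).differentiableAt (isOpen_Ioo.mem_nhds hs)).hasDerivAt
    have h2 := hEL s (Ioo_subset_Icc_self hs)
    have h3 : (fun t =>
            ((deriv u t * deriv (deriv v) t - deriv v t * deriv (deriv u) t) ^ 2)⁻¹) =ᶠ[nhds s] h := by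
      filter_upwards [isOpen_Ioo.mem_nhds hs] with t ht
      simp only [hh, hK]
      rw [du t ht, dv t ht, ddu t ht, ddv t ht]
    rw [h3.deriv.deriv_eq] at h2
    exact h1.congr_deriv (by linarith)
  have dlin : ∀ (c s : ℝ), HasDerivAt (fun s : ℝ => c * (s - L)) c s := by
    intro c s
    simpa using ((hasDerivAt_id s).sub_const L).const_mul c
  have dquad : ∀ (c s : ℝ), HasDerivAt (fun s : ℝ => c * (s - L) ^ 2) (c * (2 * (s - L))) s := by
    intro c s
    refine ((((hasDerivAt_id s).sub_const L).pow 2).const_mul c).congr_deriv ?_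
    simp
  have f1 : ∀ s ∈ Ioo 0 (2 * L), deriv h s = (lam - 2) * (s - L) + deriv h L := by
    intro s hs
    have := const_open (f := fun s => deriv h s - (lam - 2) * (s - L)) (fun s hs =>
      ((ddh s hs).sub (dlin (lam - 2) s)).congr_deriv (sub_self _)) s hs L mL
    linarith
  have f2 : ∀ s ∈ Ioo 0 (2 * L), h s = (lam - 2) / 2 * (s - L) ^ 2 + deriv h L * (s - L) + h L := by
    intro s hs
    have := const_open (f := fun s => h s - (lam - 2) / 2 * (s - L) ^ 2 - deriv h L * (s - L)) (fun s hs =>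
      (((dh s hs).sub (dquad ((lam - 2) / 2) s)).sub (dlin (deriv h L) s)).congr_deriv (by
        rw [f1 s hs]; ring)) s hs L mL
    linarith
  have hc0 : deriv h L = 0 := by
    have m1 : L / 2 ∈ Ioo 0 (2 * L) := ⟨by linarith, by linarith⟩
    have m2 : 2 * L - L / 2 ∈ Ioo 0 (2 * L) := ⟨by linarith, by linarith⟩
    have e : h (2 * L - L / 2) = h (L / 2) := by simp only [hh]; rw [sK _ m1]
    rw [f2 _ m1, f2 _ m2] at e
    have : deriv h L * L = 0 := by linarith
    rcases mul_eq_zero.1 this with h' | h'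
    · exact h'
    · exact absurd h' hL.ne'
  obtain ⟨A, hA⟩ : ∃ A, A = h L := ⟨_, rfl⟩
  obtain ⟨B, hB⟩ : ∃ B, B = 1 - lam / 2 := ⟨_, rfl⟩
  have f3 : ∀ s ∈ Ioo 0 (2 * L), h s = A - B * (s - L) ^ 2 := by
    intro s hs
    rw [f2 s hs, hc0, hA, hB]; ring
  have f4' : ∀ s ∈ Ioo 0 (2 * L), K s ^ 2 * (A - B * (s - L) ^ 2) = 1 := by
    intro s hs
    rw [← f3 s hs]
    simp only [hh]
    exact mul_inv_cancel₀ (pow_pos (hKpos s hs) 2).ne'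
  have f4 : ∀ s ∈ Icc 0 (2 * L), K s ^ 2 * (A - B * (s - L) ^ 2) = 1 := by
    have : EqOn (fun s => K s ^ 2 * (A - B * (s - L) ^ 2)) (fun _ => 1) (Icc 0 (2 * L)) :=
      Set.EqOn.of_subset_closure (s := Ioo 0 (2 * L)) f4'
        ((cK.continuousOn.pow 2).mul (by fun_prop)) continuousOn_const
        Ioo_subset_Icc_self hclos
    exact this
  have hpos : ∀ s ∈ Icc 0 (2 * L), 0 < A - B * (s - L) ^ 2 := by
    intro s hs
    have := f4 s hs
    by_contra hc
    push Not at hc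
    nlinarith [mul_nonneg (sq_nonneg (K s)) (neg_nonneg.2 hc)]
  have hKs : ∀ s ∈ Ioo 0 (2 * L), K s = 1 / √(A - B * (s - L) ^ 2) := by
    intro s hs
    rw [← f3 s hs]
    simp only [hh]
    rw [sqrt_inv, sqrt_sq (hKpos s hs).le]
    simp
  have hPP0 : P 0 ^ 2 = 1 := by
    have h1 := harc 0 m0
    rw [hv0] at h1
    have hne : deriv u 0 ≠ 0 := by
      intro h0; rw [h0] at h1; norm_num at h1
    rw [hPdef 0 (differentiableAt_of_deriv_ne_zero hne) m0]
    linarith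
  have hQ0 : Q 0 = 0 := by
    have := hone 0 m0
    have h2 : Q 0 ^ 2 = 0 := by linarith
    exact (pow_eq_zero_iff two_ne_zero).1 h2
  have hP0 : P 0 = 1 := by
    rcases mul_eq_zero.1 (show (P 0 - 1) * (P 0 + 1) = 0 by linear_combination hPP0) with h' | h'
    · linarith
    exfalso
    have hneg : P 0 < 0 := by linarith
    have hev := (cP.continuousOn 0 m0).eventually (gt_mem_nhds hneg)
    obtain ⟨δ, hδ, hδL, hδP⟩ : ∃ δ, 0 < δ ∧ δ < 2 * L ∧ ∀ s ∈ Ico 0 δ, P s < 0 := by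
      rw [eventually_nhdsWithin_iff, Metric.eventually_nhds_iff] at hev
      obtain ⟨ε, hε, he⟩ := hev
      refine ⟨min ε L, lt_min hε hL, by linarith [min_le_right ε L], fun s hs => ?_⟩
      have := hs.2
      rw [lt_min_iff] at this
      apply he
      · rw [dist_zero_right, Real.norm_eq_abs, abs_of_nonneg hs.1]; exact this.1
      · exact ⟨hs.1, by linarith⟩
    have hsub : Icc 0 δ ⊆ Icc 0 (2 * L) := Icc_subset_Icc_right hδL.le
    have hQa : StrictAntiOn Q (Icc 0 δ) := by
      apply strictAntiOn_of_deriv_neg (convex_Icc _ _) (cQ.continuousOn.mono hsub)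
      intro s hs
      rw [interior_Icc] at hs
      have hs' : s ∈ Ioo 0 (2 * L) := ⟨hs.1, by linarith [hs.2]⟩
      rw [(hQ s hs').deriv, hQ1 s hs']
      exact mul_neg_of_neg_of_pos (hδP s ⟨hs.1.le, hs.2⟩) (hKpos s hs')
    have hva : StrictAntiOn v (Icc 0 δ) := by
      apply strictAntiOn_of_deriv_neg (convex_Icc _ _) (cv.continuousOn.mono hsub)
      intro s hs
      rw [interior_Icc] at hs
      have hs' : s ∈ Ioo 0 (2 * L) := ⟨hs.1, by linarith [hs.2]⟩
      rw [(hv s hs').deriv, ← hQ0]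
      exact hQa ⟨le_rfl, hδ.le⟩ ⟨hs.1.le, hs.2.le⟩ hs.1
    have h1 := hva ⟨le_rfl, hδ.le⟩ ⟨hδ.le, le_rfl⟩ hδ
    rw [hv0'] at h1
    exact absurd (hvpos δ ⟨hδ, hδL⟩) (not_lt.2 h1.le)
  have mL' := Ioo_subset_Icc_self mL
  have eL : 2 * L - L = L := by ring
  have huL : u L = 0 := by
    have := (hsym L mL').1
    rw [eL] at this; linarith
  have hQL : Q L = 0 := by
    have := sQ L mL
    rw [eL] at this; linarith
  have hPL : P L ^ 2 = 1 := by
    have := hone L mL'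
    rw [hQL] at this; linarith
  have hne : ∀ s ∈ Ioo 0 L, u s ≠ 0 := by
    intro s hs hus
    have hs1 : s ∈ Icc 0 (2 * L) := ⟨hs.1.le, by linarith [hs.2]⟩
    have hs2 : 2 * L - s ∈ Icc 0 (2 * L) := ⟨by linarith [hs.2], by linarith [hs.1]⟩
    have := hinj hs2 hs1 (by
      simp only
      rw [(hsym s hs1).1, (hsym s hs1).2, hus, neg_zero])
    linarith [hs.2]
  obtain ⟨r1, r2, r3⟩ := core x0 L A B hx0 hL (by rw [hB]; linarith) u v P Q
    cu.continuousOn cv.continuousOn cP.continuousOn cQ.continuousOn hpos hu hv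
    (fun s hs => (hP s hs).congr_deriv (by rw [hP1 s hs, hKs s hs]; ring))
    (fun s hs => (hQ s hs).congr_deriv (by rw [hQ1 s hs, hKs s hs]; ring))
    hPL hP0 hQ0 hu0 hv0' huL hQL hne
  refine ⟨r1, ?_, r3⟩
  have : lam = 2 * (1 - B) := by rw [hB]; ring
  rw [this, r2]
  field_simp
  ring
end

section
/- Fix x₀ > 0 and, for L > 3x₀, define A₀(x₀,L) = ((L+x₀)/(2π))·(π√(x₀/(L+x₀))/sin(π√(x₀/(L+x₀))))²·(L + (2L+x₀)·sin(2π√(x₀/(L+x₀)))/(2π√(x₀/(L+x₀)))). Then the function L ↦ A₀(x₀,L) is strictly increasing on (3x₀, ∞), its limit as L → 3x₀⁺ equals (3/2)πx₀², and consequently for every A* > (3/2)πx₀² there exists a unique L > 3x₀ with A₀(x₀,L) = A*. -/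
open Real Set Filter

/-- area enclosed by the critical configuration with boundary parameter `x₀` and half-length `L` -/
noncomputable def A0 (x0 L : ℝ) : ℝ :=
  (L + x0) / (2 * π) *
    (π * Real.sqrt (x0 / (L + x0)) / Real.sin (π * Real.sqrt (x0 / (L + x0)))) ^ 2 *
    (L + (2 * L + x0) * Real.sin (2 * π * Real.sqrt (x0 / (L + x0))) /
      (2 * π * Real.sqrt (x0 / (L + x0))))

lemma aux_a (x0 L : ℝ) (hx0 : 0 < x0) (hL : 3 * x0 ≤ L) :
    0 < π * √(x0 / (L + x0)) ∧ π * √(x0 / (L + x0)) ≤ π / 2 := by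
  have hp := Real.pi_pos
  have h1 : 0 < x0 / (L + x0) := by apply div_pos <;> linarith
  refine ⟨mul_pos hp (Real.sqrt_pos.2 h1), ?_⟩
  have h2 : √(x0 / (L + x0)) ≤ 1 / 2 := by
    apply Real.sqrt_le_iff.2
    refine ⟨by norm_num, ?_⟩
    rw [div_le_iff₀ (by linarith)]
    linarith
  nlinarith

lemma aux_sin (x0 L : ℝ) (hx0 : 0 < x0) (hL : 3 * x0 ≤ L) :
    0 < Real.sin (π * √(x0 / (L + x0))) := by
  have h := aux_a x0 L hx0 hL
  exact Real.sin_pos_of_pos_of_lt_pi h.1 (by linarith [Real.pi_pos])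

lemma aux_cos (x0 L : ℝ) (hx0 : 0 < x0) (hL : 3 * x0 ≤ L) :
    0 ≤ Real.cos (π * √(x0 / (L + x0))) := by
  have h := aux_a x0 L hx0 hL
  exact Real.cos_nonneg_of_neg_pi_div_two_le_of_le (by linarith [Real.pi_pos]) h.2

lemma aux_eq (x0 L : ℝ) (hx0 : 0 < x0) (hL : 3 * x0 ≤ L) :
    A0 x0 L = (π * x0 / 2) * (L / Real.sin (π * √(x0 / (L + x0))) ^ 2 +
      (2 * L + x0) * (Real.cos (π * √(x0 / (L + x0))) /
        ((π * √(x0 / (L + x0))) * Real.sin (π * √(x0 / (L + x0)))))) := by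
  have hs := aux_sin x0 L hx0 hL
  have ha := (aux_a x0 L hx0 hL).1
  have hp := Real.pi_pos
  have hLx : 0 < L + x0 := by linarith
  have hsq : (L + x0) * (π * √(x0 / (L + x0))) ^ 2 = π ^ 2 * x0 := by
    rw [mul_pow, Real.sq_sqrt (by positivity)]
    field_simp
  unfold A0
  rw [show 2 * π * √(x0 / (L + x0)) = 2 * (π * √(x0 / (L + x0))) by ring, Real.sin_two_mul]
  generalize Real.cos (π * √(x0 / (L + x0))) = c at *
  generalize Real.sin (π * √(x0 / (L + x0))) = s at *
  generalize π * √(x0 / (L + x0)) = a at *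
  have e : (L + x0) / (2 * π) * (a / s) ^ 2 = π * x0 / 2 / s ^ 2 := by
    rw [div_pow, div_mul_div_comm, hsq]
    field_simp
  rw [e]
  field_simp

lemma aux_mono (x0 : ℝ) (hx0 : 0 < x0) : StrictMonoOn (A0 x0) (Set.Ici (3 * x0)) := by
  intro L1 h1 L2 h2 h
  simp only [Set.mem_Ici] at h1 h2
  have hp := Real.pi_pos
  rw [aux_eq x0 L1 hx0 h1, aux_eq x0 L2 hx0 h2]
  have hs2 := aux_sin x0 L2 hx0 h2
  have hc1 := aux_cos x0 L1 hx0 h1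
  have ha1 := aux_a x0 L1 hx0 h1
  have ha2 := aux_a x0 L2 hx0 h2
  have hlt : π * √(x0 / (L2 + x0)) < π * √(x0 / (L1 + x0)) := by
    apply mul_lt_mul_of_pos_left _ hp
    apply Real.sqrt_lt_sqrt
    · apply div_nonneg <;> linarith
    · apply div_lt_div_of_pos_left <;> linarith
  have hs : Real.sin (π * √(x0 / (L2 + x0))) < Real.sin (π * √(x0 / (L1 + x0))) :=
    Real.sin_lt_sin_of_lt_of_le_pi_div_two (by linarith) ha1.2 hlt
  have hc : Real.cos (π * √(x0 / (L1 + x0))) ≤ Real.cos (π * √(x0 / (L2 + x0))) :=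
    Real.cos_le_cos_of_nonneg_of_le_pi ha2.1.le (by linarith) hlt.le
  apply mul_lt_mul_of_pos_left _ (by positivity)
  apply add_lt_add_of_lt_of_le
  · apply div_lt_div₀ h _ (by linarith) (by positivity)
    gcongr
  · apply mul_le_mul (by linarith) _ _ (by linarith)
    · apply div_le_div₀ (hc1.trans hc) hc (mul_pos ha2.1 hs2)
      apply mul_le_mul hlt.le hs.le hs2.le ha1.1.le
    · exact div_nonneg hc1 (mul_nonneg ha1.1.le (hs2.le.trans hs.le))

lemma aux_cont (x0 : ℝ) (hx0 : 0 < x0) : ContinuousOn (A0 x0) (Set.Ici (3 * x0)) := by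
  intro L hL
  simp only [Set.mem_Ici] at hL
  apply ContinuousAt.continuousWithinAt
  have hs := (aux_sin x0 L hx0 hL).ne'
  have ha := (aux_a x0 L hx0 hL).1.ne'
  have hLx : L + x0 ≠ 0 := by linarith
  have hp := Real.pi_pos.ne'
  have ha2 : 2 * π * √(x0 / (L + x0)) ≠ 0 := by
    rw [mul_assoc]; exact mul_ne_zero two_ne_zero ha
  unfold A0
  fun_prop (disch := first | assumption | positivity)

lemma aux_val (x0 : ℝ) (hx0 : 0 < x0) : A0 x0 (3 * x0) = 3 / 2 * π * x0 ^ 2 := by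
  rw [aux_eq x0 _ hx0 le_rfl]
  have : √(x0 / (3 * x0 + x0)) = 1 / 2 := by
    rw [show x0 / (3 * x0 + x0) = (1 / 2) ^ 2 by field_simp; norm_num]
    exact Real.sqrt_sq (by norm_num)
  rw [this, mul_one_div, Real.sin_pi_div_two, Real.cos_pi_div_two]
  ring

lemma aux_lb (x0 L : ℝ) (hx0 : 0 < x0) (hL : 3 * x0 ≤ L) : π * x0 / 2 * L ≤ A0 x0 L := by
  rw [aux_eq x0 _ hx0 hL]
  have hs := aux_sin x0 L hx0 hL
  have ha := (aux_a x0 L hx0 hL).1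
  have hc := aux_cos x0 L hx0 hL
  have hs1 := Real.sin_le_one (π * √(x0 / (L + x0)))
  have hp := Real.pi_pos
  apply mul_le_mul_of_nonneg_left _ (by positivity)
  have h1 : L ≤ L / Real.sin (π * √(x0 / (L + x0))) ^ 2 := by
    rw [le_div_iff₀ (by positivity)]
    have : Real.sin (π * √(x0 / (L + x0))) ^ 2 ≤ 1 := by nlinarith
    nlinarith
  have h2 : 0 ≤ (2 * L + x0) * (Real.cos (π * √(x0 / (L + x0))) /
        ((π * √(x0 / (L + x0))) * Real.sin (π * √(x0 / (L + x0))))) :=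
    mul_nonneg (by linarith) (div_nonneg hc (mul_pos ha hs).le)
  linarith

/-- `L ↦ A₀(x₀,L)` is strictly increasing on `(3x₀,∞)`, tends to `(3/2)πx₀²`
as `L → 3x₀⁺`, and hence every area `A* > (3/2)πx₀²` is attained at a unique `L > 3x₀`. -/
theorem statement3 (x0 : ℝ) (hx0 : 0 < x0) :
    StrictMonoOn (A0 x0) (Set.Ioi (3 * x0)) ∧
    Filter.Tendsto (A0 x0) (nhdsWithin (3 * x0) (Set.Ioi (3 * x0)))
      (nhds (3 / 2 * π * x0 ^ 2)) ∧
    ∀ Astar : ℝ, 3 / 2 * π * x0 ^ 2 < Astar →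
      ∃! L : ℝ, L ∈ Set.Ioi (3 * x0) ∧ A0 x0 L = Astar := by
  have hm := (aux_mono x0 hx0).mono Set.Ioi_subset_Ici_self
  have hp := Real.pi_pos
  refine ⟨hm, ?_, ?_⟩
  · rw [← aux_val x0 hx0]
    exact ((aux_cont x0 hx0) (3 * x0) (Set.mem_Ici.2 le_rfl)).mono Set.Ioi_subset_Ici_self
  · intro A hA
    have hk : 0 < π * x0 / 2 := by positivity
    obtain ⟨M, hM1, hM2⟩ : ∃ M, 3 * x0 ≤ M ∧ A < A0 x0 M := by
      refine ⟨max (3 * x0) (A / (π * x0 / 2) + 1), le_max_left _ _, ?_⟩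
      refine lt_of_lt_of_le ?_ (aux_lb x0 _ hx0 (le_max_left _ _))
      refine lt_of_lt_of_le ?_ (mul_le_mul_of_nonneg_left (le_max_right _ _) hk.le)
      rw [mul_add, mul_div_cancel₀ _ hk.ne']
      linarith
    have hI := intermediate_value_Ioo hM1 ((aux_cont x0 hx0).mono Set.Icc_subset_Ici_self)
    obtain ⟨L, hL, hLA⟩ := hI ⟨by rw [aux_val x0 hx0]; exact hA, hM2⟩
    refine ⟨L, ⟨hL.1, hLA⟩, ?_⟩
    rintro y ⟨hy, hyA⟩
    exact hm.injOn hy hL.1 (hyA.trans hLA.symm)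
end

section
/- For every x₀ > 0 and L > 3x₀, the enclosed area of the critical configuration strictly exceeds half its total inverse curvature: πκ²σ²/(2(π²−σ²)) + πκ²σ(π²+σ²)·sin(2σ)/(4(π²−σ²)²) > (1/2)·κ²σ(2σ + sin(2σ))/(2π). Equivalently, writing λ = 2L/(L+x₀), the enclosed area equals (1/λ)·((2(π²−σ²)σ + (π²+σ²)sin(2σ))/(2(π²−σ²)σ + (π²−σ²)sin(2σ))) times the total inverse curvature, and this factor times 1/λ is strictly greater than 1/2. -/
open Real Set

/-- area enclosed by the critical configuration -/
noncomputable def areaVal (x0 L : ℝ) : ℝ :=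
  π * kap x0 L ^ 2 * sig x0 L ^ 2 / (2 * (π ^ 2 - sig x0 L ^ 2)) +
    π * kap x0 L ^ 2 * sig x0 L * (π ^ 2 + sig x0 L ^ 2) * Real.sin (2 * sig x0 L) /
      (4 * (π ^ 2 - sig x0 L ^ 2) ^ 2)

/-- total inverse curvature of the critical configuration -/
noncomputable def ticVal (x0 L : ℝ) : ℝ :=
  kap x0 L ^ 2 * sig x0 L * (2 * sig x0 L + Real.sin (2 * sig x0 L)) / (2 * π)

/-- the ratio factor relating area and total inverse curvature -/
noncomputable def factorVal (x0 L : ℝ) : ℝ :=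
  (2 * (π ^ 2 - sig x0 L ^ 2) * sig x0 L + (π ^ 2 + sig x0 L ^ 2) * Real.sin (2 * sig x0 L)) /
    (2 * (π ^ 2 - sig x0 L ^ 2) * sig x0 L + (π ^ 2 - sig x0 L ^ 2) * Real.sin (2 * sig x0 L))

/-- the enclosed area of the critical configuration strictly exceeds half of its
total inverse curvature; equivalently, area `= (1/λ)·factor·`(total inverse curvature) with
`(1/λ)·factor > 1/2`, where `λ = 2L/(L+x₀)`. -/
theorem statement5 (x0 L : ℝ) (hx0 : 0 < x0) (hL : 3 * x0 < L) :
    1 / 2 * ticVal x0 L < areaVal x0 L ∧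
    areaVal x0 L = 1 / (2 * L / (L + x0)) * factorVal x0 L * ticVal x0 L ∧
    1 / 2 < 1 / (2 * L / (L + x0)) * factorVal x0 L := by
  have hLp : 0 < L := by linarith
  have hS : 0 < L + x0 := by linarith
  have hpi := Real.pi_pos
  have hr0 : 0 < x0 / (L + x0) := div_pos hx0 hS
  have hr1 : x0 / (L + x0) < (1 / 2) ^ 2 := by
    rw [div_lt_iff₀ hS]; linarith
  have hq0 : 0 < Real.sqrt (x0 / (L + x0)) := Real.sqrt_pos.mpr hr0
  have hq1 : Real.sqrt (x0 / (L + x0)) < 1 / 2 := by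
    rw [Real.sqrt_lt' (by norm_num)]; exact hr1
  have hs0 : 0 < sig x0 L := mul_pos hpi hq0
  have hs1 : sig x0 L < π / 2 := by
    have := mul_lt_mul_of_pos_left hq1 hpi
    unfold sig; linarith
  have hs2 : sig x0 L ^ 2 * (L + x0) = π ^ 2 * x0 := by
    unfold sig
    rw [mul_pow, Real.sq_sqrt hr0.le]; field_simp
  have hk : 0 < kap x0 L := div_pos hLp (Real.sin_pos_of_pos_of_lt_pi hs0 (by linarith))
  have hsin : 0 < Real.sin (2 * sig x0 L) :=
    Real.sin_pos_of_pos_of_lt_pi (by linarith) (by linarith)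
  have hd : 0 < π ^ 2 - sig x0 L ^ 2 := by nlinarith
  have htic : 0 < ticVal x0 L := by unfold ticVal; positivity
  have hlam : 1 / (2 * L / (L + x0)) = π ^ 2 / (2 * (π ^ 2 - sig x0 L ^ 2)) := by
    rw [one_div_div, div_eq_div_iff (by positivity) (by positivity)]
    linear_combination (-2) * hs2
  have hA : areaVal x0 L = 1 / (2 * L / (L + x0)) * factorVal x0 L * ticVal x0 L := by
    rw [hlam]
    unfold areaVal factorVal ticVal
    generalize kap x0 L = k at *
    generalize Real.sin (2 * sig x0 L) = s at *
    generalize sig x0 L = t at *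
    have hsum : 0 < 2 * t + s := by positivity
    have e : 2 * (π ^ 2 - t ^ 2) * t + (π ^ 2 - t ^ 2) * s = (π ^ 2 - t ^ 2) * (2 * t + s) := by
      ring
    rw [e]
    have hd' := hd.ne'
    have hsum' := hsum.ne'
    generalize hD : π ^ 2 - t ^ 2 = D at *
    field_simp
    ring
  have hF : 1 / 2 < 1 / (2 * L / (L + x0)) * factorVal x0 L := by
    have h1 : 1 / 2 < 1 / (2 * L / (L + x0)) := by
      rw [one_div_div, div_lt_div_iff₀ (by norm_num) (by positivity)]; linarith
    have h2 : 1 ≤ factorVal x0 L := by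
      unfold factorVal
      rw [one_le_div (by positivity)]
      have : 0 ≤ sig x0 L ^ 2 * Real.sin (2 * sig x0 L) := by positivity
      linarith
    nlinarith
  refine ⟨?_, hA, hF⟩
  rw [hA]
  exact mul_lt_mul_of_pos_right hF htic
end

section
/- Let L > 0 and let γ ∈ C^∞([0,2L], ℝ²) be parametrized by arc-length with curvature H(s) = ⟨γ̇(s), γ̈(s)^⊥⟩ > 0 for all s. Let X ∈ C^∞([0,2L], ℝ²) with X(0) = X(2L) = 0, and set N(s) = γ̇(s)^⊥. Define, for t near 0, F(t) = ∫₀^{2L} |γ̇(s)+tẊ(s)|⁴ / ⟨γ̇(s)+tẊ(s), (γ̈(s)+tẌ(s))^⊥⟩ ds (well defined for |t| small since the denominator is positive at t = 0). Then F is differentiable at t = 0 and F'(0) = ∫₀^{2L} ((d²/ds²)(H(s)⁻²) + 2)·⟨X(s), N(s)⟩ ds + H(2L)⁻²·(d/ds)⟨X,N⟩(2L) − H(0)⁻²·(d/ds)⟨X,N⟩(0). -/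
open Real Set

/-- curvature `H = ⟨γ̇, γ̈^⊥⟩ = u̇ v̈ − v̇ ü` of an arc-length plane curve `γ = (u, v)`,
where `(a₁,a₂)^⊥ = (a₂,−a₁)`. -/
noncomputable def Hgen (u v : ℝ → ℝ) (s : ℝ) : ℝ :=
  deriv u s * deriv (deriv v) s - deriv v s * deriv (deriv u) s

theorem diff_under (b : ℝ) (hb : 0 ≤ b) (N D N' D' : ℝ → ℝ → ℝ)
    (hN : Continuous (Function.uncurry N)) (hD : Continuous (Function.uncurry D))
    (hN' : Continuous (Function.uncurry N')) (hD' : Continuous (Function.uncurry D'))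
    (dN : ∀ t s, HasDerivAt (fun t => N t s) (N' t s) t)
    (dD : ∀ t s, HasDerivAt (fun t => D t s) (D' t s) t)
    (hpos : ∀ s ∈ Set.Icc 0 b, 0 < D 0 s) :
    HasDerivAt (fun t => ∫ s in (0:ℝ)..b, N t s / D t s)
      (∫ s in (0:ℝ)..b, (N' 0 s * D 0 s - N 0 s * D' 0 s) / D 0 s ^ 2) 0 := by
  have hopen : IsOpen {x : ℝ × ℝ | 0 < Function.uncurry D x} := isOpen_lt continuous_const hD
  obtain ⟨U, V, hU, hV, h0U, hIV, hUV⟩ := generalized_tube_lemma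
    (isCompact_singleton (x := (0:ℝ))) (isCompact_Icc (a := (0:ℝ)) (b := b)) hopen (by
      rintro ⟨t, s⟩ ⟨ht, hs⟩
      simp only [Set.mem_singleton_iff] at ht
      subst ht
      exact hpos s hs)
  obtain ⟨ε, hε, hball⟩ := Metric.isOpen_iff.1 hU 0 (h0U rfl)
  have hDpos : ∀ t ∈ Metric.closedBall (0:ℝ) (ε/2), ∀ s ∈ Set.Icc 0 b, 0 < D t s := by
    intro t ht s hs
    have : (t, s) ∈ U ×ˢ V := ⟨hball (Metric.closedBall_subset_ball (by linarith) ht), hIV hs⟩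
    exact hUV this
  have hcont : ContinuousOn (fun x : ℝ × ℝ => (N' x.1 x.2 * D x.1 x.2 - N x.1 x.2 * D' x.1 x.2) / D x.1 x.2 ^ 2)
      (Metric.closedBall (0:ℝ) (ε/2) ×ˢ Set.Icc 0 b) := by
    apply ContinuousOn.div
    · exact (Continuous.sub (hN'.mul hD) (hN.mul hD')).continuousOn
    · exact (hD.pow 2).continuousOn
    · rintro ⟨t, s⟩ ⟨ht, hs⟩
      exact pow_ne_zero _ (hDpos t ht s hs).ne'
  obtain ⟨C, hC⟩ := ((isCompact_closedBall (0:ℝ) (ε/2)).prod isCompact_Icc).exists_bound_of_continuousOn hcont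
  have h0mem : (0:ℝ) ∈ Metric.closedBall (0:ℝ) (ε/2) := Metric.mem_closedBall_self (by linarith)
  have cN : ∀ t, Continuous (N t) := fun t => hN.comp (by fun_prop : Continuous fun s : ℝ => (t, s))
  have cD : ∀ t, Continuous (D t) := fun t => hD.comp (by fun_prop : Continuous fun s : ℝ => (t, s))
  have cN' : ∀ t, Continuous (N' t) := fun t => hN'.comp (by fun_prop : Continuous fun s : ℝ => (t, s))
  have cD' : ∀ t, Continuous (D' t) := fun t => hD'.comp (by fun_prop : Continuous fun s : ℝ => (t, s))
  have hint : ∀ t ∈ Metric.closedBall (0:ℝ) (ε/2),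
      IntervalIntegrable (fun s => N t s / D t s) MeasureTheory.volume 0 b := by
    intro t ht
    apply ContinuousOn.intervalIntegrable
    rw [Set.uIcc_of_le hb]
    exact (cN t).continuousOn.div (cD t).continuousOn fun s hs => (hDpos t ht s hs).ne'
  refine (intervalIntegral.hasDerivAt_integral_of_dominated_loc_of_deriv_le
    (F := fun t s => N t s / D t s)
    (F' := fun t s => (N' t s * D t s - N t s * D' t s) / D t s ^ 2)
    (bound := fun _ => C) (s := Metric.closedBall (0:ℝ) (ε/2))
    (Metric.closedBall_mem_nhds _ (by linarith)) ?_ (hint 0 h0mem) ?_ ?_ ?_ ?_).2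
  · filter_upwards [Metric.closedBall_mem_nhds (0:ℝ) (by linarith : 0 < ε/2)] with t ht
    rw [Set.uIoc_of_le hb]
    exact (hint t ht).1.aestronglyMeasurable
  · have : IntervalIntegrable (fun s => (N' 0 s * D 0 s - N 0 s * D' 0 s) / D 0 s ^ 2) MeasureTheory.volume 0 b := by
      apply ContinuousOn.intervalIntegrable
      rw [Set.uIcc_of_le hb]
      exact (((cN' 0).mul (cD 0)).sub ((cN 0).mul (cD' 0))).continuousOn.div ((cD 0).pow 2).continuousOn
        fun s hs => pow_ne_zero _ (hDpos 0 h0mem s hs).ne'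
    rw [Set.uIoc_of_le hb]
    exact this.1.aestronglyMeasurable
  · refine Filter.Eventually.of_forall fun s hs t ht => ?_
    rw [Set.uIoc_of_le hb] at hs
    exact hC (t, s) ⟨ht, Set.Ioc_subset_Icc_self hs⟩
  · exact intervalIntegrable_const
  · refine Filter.Eventually.of_forall fun s hs t ht => ?_
    rw [Set.uIoc_of_le hb] at hs
    exact (dN t s).div (dD t s) (hDpos t ht s (Set.Ioc_subset_Icc_self hs)).ne'

theorem key_alg (u1 v1 u2 v2 u3 v3 p q p1 q1 p2 q2 H : ℝ)
    (h1 : u1 ^ 2 + v1 ^ 2 = 1) (h2 : u1 * u2 + v1 * v2 = 0)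
    (h3 : u2 ^ 2 + u1 * u3 + v2 ^ 2 + v1 * v3 = 0) (hH : H = u1 * v2 - v1 * u2)
    (hH0 : H ≠ 0) :
    (2 * (u1 ^ 2 + v1 ^ 2) * (2 * u1 * p1 + 2 * v1 * q1) * H - (u1 ^ 2 + v1 ^ 2) ^ 2 *
      (p1 * v2 + u1 * q2 - (q1 * u2 + v1 * p2))) / H ^ 2
    = (p2 * v1 - q2 * u1 + 2 * (p1 * v2 - q1 * u2) + (p * v3 - q * u3)) * (H ^ 2)⁻¹
      + 2 * (p * v1 - q * u1)
      + ((p1 * u1 + p * u2 + q1 * v1 + q * v2) * H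
        - (p * u1 + q * v1) * (u1 * v3 - v1 * u3)) / H ^ 2 := by
  have hv2 : v2 = H * u1 := by
    rw [hH]; linear_combination v1 * h2 - v2 * h1
  have hu2 : u2 = -(H * v1) := by
    rw [hH]; linear_combination u1 * h2 - u2 * h1
  set H1 := u1 * v3 - v1 * u3 with hH1
  have h3' : u1 * u3 + v1 * v3 = - H ^ 2 := by
    rw [hu2, hv2] at h3; linear_combination h3 - H ^ 2 * h1
  have hv3 : v3 = H1 * u1 - H ^ 2 * v1 := by
    rw [hH1]; linear_combination v1 * h3' - v3 * h1
  have hu3 : u3 = -H1 * v1 - H ^ 2 * u1 := by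
    rw [hH1]; linear_combination u1 * h3' - u3 * h1
  rw [h1]
  clear_value H1
  subst hv3 hu3
  subst hv2 hu2
  field_simp
  ring

theorem statement7 (L : ℝ) (hL : 0 < L) (u v p q : ℝ → ℝ)
    (hu : ContDiff ℝ (⊤ : ℕ∞) u) (hv : ContDiff ℝ (⊤ : ℕ∞) v)
    (hp : ContDiff ℝ (⊤ : ℕ∞) p) (hq : ContDiff ℝ (⊤ : ℕ∞) q)
    (harc : ∀ s ∈ Set.Icc (0:ℝ) (2 * L), deriv u s ^ 2 + deriv v s ^ 2 = 1)
    (hcurv : ∀ s ∈ Set.Icc (0:ℝ) (2 * L), 0 < Hgen u v s)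
    (hp0 : p 0 = 0) (hq0 : q 0 = 0) (hp2 : p (2 * L) = 0) (hq2 : q (2 * L) = 0) :
    HasDerivAt
      (fun t => ∫ s in (0:ℝ)..(2 * L),
        ((deriv u s + t * deriv p s) ^ 2 + (deriv v s + t * deriv q s) ^ 2) ^ 2 /
          ((deriv u s + t * deriv p s) * (deriv (deriv v) s + t * deriv (deriv q) s) -
            (deriv v s + t * deriv q s) * (deriv (deriv u) s + t * deriv (deriv p) s)))
      ((∫ s in (0:ℝ)..(2 * L),
          (deriv (deriv fun r => (Hgen u v r ^ 2)⁻¹) s + 2) *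
            (p s * deriv v s - q s * deriv u s)) +
        (Hgen u v (2 * L) ^ 2)⁻¹ *
          deriv (fun r => p r * deriv v r - q r * deriv u r) (2 * L) -
        (Hgen u v 0 ^ 2)⁻¹ * deriv (fun r => p r * deriv v r - q r * deriv u r) 0)
      0 := by
  have hb : (0:ℝ) ≤ 2 * L := by linarith
  have step : ∀ {f : ℝ → ℝ}, ContDiff ℝ (⊤ : ℕ∞) f → ContDiff ℝ (⊤ : ℕ∞) (deriv f) :=
    fun hf => (contDiff_infty_iff_deriv.1 hf).2
  have hd : ∀ {f : ℝ → ℝ}, ContDiff ℝ (⊤ : ℕ∞) f → ∀ s, HasDerivAt f (deriv f s) s :=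
    fun hf s => ((contDiff_infty_iff_deriv.1 hf).1 s).hasDerivAt
  have hu1 := step hu
  have hv1 := step hv
  have hp1 := step hp
  have hq1 := step hq
  have hu2 := step hu1
  have hv2 := step hv1
  have hp2' := step hp1
  have hq2' := step hq1
  have du := hd hu
  have dv := hd hv
  have dp := hd hp
  have dq := hd hq
  have du1 := hd hu1
  have dv1 := hd hv1
  have dp1 := hd hp1
  have dq1 := hd hq1
  have du2 := hd hu2
  have dv2 := hd hv2
  have hH : ContDiff ℝ (⊤ : ℕ∞) (Hgen u v) := (hu1.mul hv2).sub (hv1.mul hu2)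
  have dH : ∀ s, HasDerivAt (Hgen u v)
      (deriv u s * deriv (deriv (deriv v)) s - deriv v s * deriv (deriv (deriv u)) s) s := by
    intro s
    refine (((du1 s).mul (dv2 s)).sub ((dv1 s).mul (du2 s))).congr_deriv ?_
    ring
  have Hdef : ∀ s, Hgen u v s = deriv u s * deriv (deriv v) s - deriv v s * deriv (deriv u) s :=
    fun s => rfl
  set w : ℝ → ℝ := fun r => (Hgen u v r ^ 2)⁻¹ with hw
  set f : ℝ → ℝ := fun r => p r * deriv v r - q r * deriv u r with hf
  have df : ∀ s, HasDerivAt f (deriv p s * deriv v s + p s * deriv (deriv v) s -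
      (deriv q s * deriv u s + q s * deriv (deriv u) s)) s := fun s =>
    ((dp s).mul (dv1 s)).sub ((dq s).mul (du1 s))
  have df' : deriv f = fun s => (deriv p s * deriv v s + p s * deriv (deriv v) s -
      (deriv q s * deriv u s + q s * deriv (deriv u) s)) := funext fun s => (df s).deriv
  have ddf : ∀ s, HasDerivAt (deriv f)
      (deriv (deriv p) s * deriv v s - deriv (deriv q) s * deriv u s
        + 2 * (deriv p s * deriv (deriv v) s - deriv q s * deriv (deriv u) s)
        + (p s * deriv (deriv (deriv v)) s - q s * deriv (deriv (deriv u)) s)) s := by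
    intro s
    rw [df']
    refine ((((dp1 s).mul (dv1 s)).add ((dp s).mul (dv2 s))).sub
      (((dq1 s).mul (du1 s)).add ((dq s).mul (du2 s)))).congr_deriv ?_
    ring
  have hwc : ∀ s ∈ Set.Icc (0:ℝ) (2 * L), ContDiffAt ℝ (⊤ : ℕ∞) w s := fun s hs =>
    ((hH.pow 2).contDiffAt).inv (pow_ne_zero _ (hcurv s hs).ne')
  have hwc1 : ∀ s ∈ Set.Icc (0:ℝ) (2 * L), ContDiffAt ℝ (⊤ : ℕ∞) (deriv w) s := fun s hs =>
    (hwc s hs).derivWithin (by simp)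
  have hwc2 : ∀ s ∈ Set.Icc (0:ℝ) (2 * L), ContDiffAt ℝ (⊤ : ℕ∞) (deriv (deriv w)) s := fun s hs =>
    (hwc1 s hs).derivWithin (by simp)
  have dw : ∀ s ∈ Set.Icc (0:ℝ) (2 * L), HasDerivAt w (deriv w s) s := fun s hs =>
    ((hwc s hs).differentiableAt (by simp)).hasDerivAt
  have dw1 : ∀ s ∈ Set.Icc (0:ℝ) (2 * L), HasDerivAt (deriv w) (deriv (deriv w) s) s := fun s hs =>
    ((hwc1 s hs).differentiableAt (by simp)).hasDerivAt
  -- the antiderivative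
  let G : ℝ → ℝ := fun s => deriv f s * w s - f s * deriv w s
    + (p s * deriv u s + q s * deriv v s) / Hgen u v s
  have dG : ∀ s ∈ Set.Icc (0:ℝ) (2 * L), HasDerivAt G
      ((deriv (deriv p) s * deriv v s - deriv (deriv q) s * deriv u s
        + 2 * (deriv p s * deriv (deriv v) s - deriv q s * deriv (deriv u) s)
        + (p s * deriv (deriv (deriv v)) s - q s * deriv (deriv (deriv u)) s)) * w s
        - f s * deriv (deriv w) s
        + ((deriv p s * deriv u s + p s * deriv (deriv u) s + deriv q s * deriv v s
            + q s * deriv (deriv v) s) * Hgen u v s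
          - (p s * deriv u s + q s * deriv v s) *
            (deriv u s * deriv (deriv (deriv v)) s - deriv v s * deriv (deriv (deriv u)) s))
            / Hgen u v s ^ 2) s := by
    intro s hs
    refine ((((ddf s).mul (dw s hs)).sub ((df s).mul (dw1 s hs))).add
      ((((dp s).mul (du1 s)).add ((dq s).mul (dv1 s))).div (dH s) (hcurv s hs).ne')).congr_deriv ?_
    simp only [df', Pi.add_apply, Pi.mul_apply]
    ring
  -- derivative of the integrand
  let I : ℝ → ℝ := fun s => (2 * (deriv u s ^ 2 + deriv v s ^ 2) *
      (2 * deriv u s * deriv p s + 2 * deriv v s * deriv q s) * Hgen u v s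
      - (deriv u s ^ 2 + deriv v s ^ 2) ^ 2 *
      (deriv p s * deriv (deriv v) s + deriv u s * deriv (deriv q) s
        - (deriv q s * deriv (deriv u) s + deriv v s * deriv (deriv p) s))) / Hgen u v s ^ 2
  let R : ℝ → ℝ := fun s => (deriv (deriv w) s + 2) * f s
  have cu1 := hu1.continuous
  have cv1 := hv1.continuous
  have cp1 := hp1.continuous
  have cq1 := hq1.continuous
  have cu2 := hu2.continuous
  have cv2 := hv2.continuous
  have cp2 := hp2'.continuous
  have cq2 := hq2'.continuous
  have cH := hH.continuous
  have cf : Continuous f := (hp.continuous.mul cv1).sub (hq.continuous.mul cu1)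
  have hIint : IntervalIntegrable I MeasureTheory.volume 0 (2 * L) := by
    apply ContinuousOn.intervalIntegrable
    rw [Set.uIcc_of_le hb]
    refine ContinuousOn.div (Continuous.continuousOn (by fun_prop))
      (Continuous.continuousOn (by fun_prop)) fun s hs => pow_ne_zero _ (hcurv s hs).ne'
  have hRint : IntervalIntegrable R MeasureTheory.volume 0 (2 * L) := by
    apply ContinuousOn.intervalIntegrable
    rw [Set.uIcc_of_le hb]
    intro s hs
    exact (((hwc2 s hs).continuousAt.add continuousAt_const).mul
      cf.continuousAt).continuousWithinAt
  have dG' : ∀ s ∈ Set.Ioo (0:ℝ) (2 * L), HasDerivAt G (I s - R s) s := by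
    have e2 : ∀ s ∈ Set.Ioo (0:ℝ) (2 * L),
        deriv u s * deriv (deriv u) s + deriv v s * deriv (deriv v) s = 0 := by
      intro s hs
      have h1 : HasDerivAt (fun s => deriv u s ^ 2 + deriv v s ^ 2) 0 s := by
        refine (hasDerivAt_const s (1:ℝ)).congr_of_eventuallyEq ?_
        filter_upwards [isOpen_Ioo.mem_nhds hs] with r hr
        exact harc r (Set.Ioo_subset_Icc_self hr)
      have h2 := (((du1 s).pow 2).add ((dv1 s).pow 2)).unique h1
      norm_num at h2
      linarith
    intro s hs
    have hsc := Set.Ioo_subset_Icc_self hs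
    have e3 : deriv (deriv u) s ^ 2 + deriv u s * deriv (deriv (deriv u)) s
        + deriv (deriv v) s ^ 2 + deriv v s * deriv (deriv (deriv v)) s = 0 := by
      have h1 : HasDerivAt (fun s => deriv u s * deriv (deriv u) s
          + deriv v s * deriv (deriv v) s) 0 s := by
        refine (hasDerivAt_const s (0:ℝ)).congr_of_eventuallyEq ?_
        filter_upwards [isOpen_Ioo.mem_nhds hs] with r hr
        exact e2 r hr
      have h2 := (((du1 s).mul (du2 s)).add ((dv1 s).mul (dv2 s))).unique h1
      linarith
    refine (dG s hsc).congr_deriv ?_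
    have := key_alg (deriv u s) (deriv v s) (deriv (deriv u) s) (deriv (deriv v) s)
      (deriv (deriv (deriv u)) s) (deriv (deriv (deriv v)) s) (p s) (q s) (deriv p s) (deriv q s)
      (deriv (deriv p) s) (deriv (deriv q) s) (Hgen u v s) (harc s hsc) (e2 s hs) e3 (Hdef s)
      (hcurv s hsc).ne'
    simp only [I, R, hf]
    rw [this]
    simp only [hw]
    ring
  have hFTC := intervalIntegral.integral_eq_sub_of_hasDerivAt_of_le hb
    (fun s hs => (dG s hs).continuousAt.continuousWithinAt) dG' (hIint.sub hRint)
  rw [intervalIntegral.integral_sub hIint hRint] at hFTC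
  have main := diff_under (2 * L) hb
    (fun t s => ((deriv u s + t * deriv p s) ^ 2 + (deriv v s + t * deriv q s) ^ 2) ^ 2)
    (fun t s => ((deriv u s + t * deriv p s) * (deriv (deriv v) s + t * deriv (deriv q) s) -
            (deriv v s + t * deriv q s) * (deriv (deriv u) s + t * deriv (deriv p) s)))
    (fun t s => 2 * ((deriv u s + t * deriv p s) ^ 2 + (deriv v s + t * deriv q s) ^ 2) *
      (2 * (deriv u s + t * deriv p s) * deriv p s + 2 * (deriv v s + t * deriv q s) * deriv q s))
    (fun t s => deriv p s * (deriv (deriv v) s + t * deriv (deriv q) s)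
      + (deriv u s + t * deriv p s) * deriv (deriv q) s
      - (deriv q s * (deriv (deriv u) s + t * deriv (deriv p) s)
      + (deriv v s + t * deriv q s) * deriv (deriv p) s))
    (by unfold Function.uncurry; fun_prop) (by unfold Function.uncurry; fun_prop)
    (by unfold Function.uncurry; fun_prop) (by unfold Function.uncurry; fun_prop)
    (by
      intro t s
      have l : ∀ a b : ℝ, HasDerivAt (fun t : ℝ => a + t * b) b t := fun a b => by
        simpa using ((hasDerivAt_id t).mul_const b).const_add a
      refine ((((l (deriv u s) (deriv p s)).pow 2).add
        ((l (deriv v s) (deriv q s)).pow 2)).pow 2).congr_deriv ?_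
      simp)
    (by
      intro t s
      have l : ∀ a b : ℝ, HasDerivAt (fun t : ℝ => a + t * b) b t := fun a b => by
        simpa using ((hasDerivAt_id t).mul_const b).const_add a
      exact ((l _ _).mul (l _ _)).sub ((l _ _).mul (l _ _)))
    (by
      intro s hs
      simpa [Hgen] using hcurv s hs)
  refine main.congr_deriv ?_
  have hI : (∫ s in (0:ℝ)..(2 * L), I s) = (∫ s in (0:ℝ)..(2 * L), R s) + (G (2 * L) - G 0) := by
    linarith
  have hG2 : G (2 * L) = w (2 * L) * deriv f (2 * L) := by
    simp only [G, hf, hp2, hq2]; ring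
  have hG0 : G 0 = w 0 * deriv f 0 := by
    simp only [G, hf, hp0, hq0]; ring
  rw [hG2, hG0] at hI
  have hII : ∀ s, I s = I s := fun s => rfl
  simp only [zero_mul, add_zero]
  change (∫ s in (0:ℝ)..(2 * L), I s) = (∫ s in (0:ℝ)..(2 * L), R s) + w (2 * L) * deriv f (2 * L) - w 0 * deriv f 0
  rw [hI]
  ring
end

section
/- Let ȳ > 0 and let f, g ∈ C²([0,ȳ], ℝ) satisfy f''(y) > 0 and g''(y) < 0 for all y ∈ [0,ȳ]. Then ∫₀^{ȳ} (4/(f''(y)−g''(y)))·(1 + ((f'(y)−g'(y))/2)²)² dy ≤ ∫₀^{ȳ} ((1+f'(y)²)²/f''(y) + (1+g'(y)²)²/(−g''(y))) dy, with equality if and only if f'(y) = −g'(y) and f''(y) = −g''(y) for every y ∈ [0,ȳ]. -/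
open Real Set

lemma aux_identity (a b p q : ℝ) (hp : 0 < p) (hq : q < 0) :
    ((1 + a ^ 2) ^ 2 / p + (1 + b ^ 2) ^ 2 / (-q)) -
      4 / (p - q) * (1 + ((a - b) / 2) ^ 2) ^ 2 =
    ((1 + a ^ 2) * (-q) - (1 + b ^ 2) * p) ^ 2 / (p * (-q) * (p - q)) +
      (((a + b) ^ 2 / 2) * ((1 + a ^ 2) + (1 + b ^ 2) + 2 * (1 + ((a - b) / 2) ^ 2))) / (p - q) := by
  have h1 : p ≠ 0 := hp.ne'
  have h2 : q ≠ 0 := hq.ne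
  have h3 : p - q ≠ 0 := by linarith
  field_simp
  ring

lemma aux_le (a b p q : ℝ) (hp : 0 < p) (hq : q < 0) :
    4 / (p - q) * (1 + ((a - b) / 2) ^ 2) ^ 2 ≤
      (1 + a ^ 2) ^ 2 / p + (1 + b ^ 2) ^ 2 / (-q) := by
  have h := aux_identity a b p q hp hq
  have h2 : 0 < -q := by linarith
  have h3 : 0 < p - q := by linarith
  have : 0 ≤ ((1 + a ^ 2) * (-q) - (1 + b ^ 2) * p) ^ 2 / (p * (-q) * (p - q)) := by positivity
  have : 0 ≤ (((a + b) ^ 2 / 2) * ((1 + a ^ 2) + (1 + b ^ 2) + 2 * (1 + ((a - b) / 2) ^ 2))) / (p - q) := by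
    positivity
  linarith

lemma aux_eq_s8 (a b p q : ℝ) (hp : 0 < p) (hq : q < 0)
    (he : (1 + a ^ 2) ^ 2 / p + (1 + b ^ 2) ^ 2 / (-q) ≤
      4 / (p - q) * (1 + ((a - b) / 2) ^ 2) ^ 2) : a = -b ∧ p = -q := by
  have h := aux_identity a b p q hp hq
  have h2 : 0 < -q := by linarith
  have h3 : 0 < p - q := by linarith
  have k1 : 0 ≤ ((1 + a ^ 2) * (-q) - (1 + b ^ 2) * p) ^ 2 / (p * (-q) * (p - q)) := by positivity
  have k2 : 0 ≤ (((a + b) ^ 2 / 2) * ((1 + a ^ 2) + (1 + b ^ 2) + 2 * (1 + ((a - b) / 2) ^ 2))) / (p - q) := by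
    positivity
  have e1 : ((1 + a ^ 2) * (-q) - (1 + b ^ 2) * p) ^ 2 / (p * (-q) * (p - q)) = 0 := by linarith
  have e2 : (((a + b) ^ 2 / 2) * ((1 + a ^ 2) + (1 + b ^ 2) + 2 * (1 + ((a - b) / 2) ^ 2))) / (p - q) = 0 := by
    linarith
  have hc : (1 + a ^ 2) + (1 + b ^ 2) + 2 * (1 + ((a - b) / 2) ^ 2) ≠ 0 := by positivity
  have hd : p * (-q) * (p - q) ≠ 0 := by positivity
  rw [div_eq_zero_iff, or_iff_left h3.ne', mul_eq_zero, or_iff_left hc] at e2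
  rw [div_eq_zero_iff, or_iff_left hd, sq_eq_zero_iff] at e1
  have hab : a + b = 0 := by
    apply pow_eq_zero_iff two_ne_zero |>.1
    linarith
  have ha : a = -b := by linarith
  refine ⟨ha, ?_⟩
  subst ha
  have hb : 1 + b ^ 2 ≠ 0 := by positivity
  apply mul_left_cancel₀ hb
  linarith

/-- the Steiner-symmetrization inequality for the total inverse curvature, with
equality if and only if the region is already symmetric (`f' = −g'`, `f'' = −g''`). -/
theorem statement8 (ybar : ℝ) (hybar : 0 < ybar) (f g : ℝ → ℝ)
    (hf : ContDiff ℝ 2 f) (hg : ContDiff ℝ 2 g)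
    (hf'' : ∀ y ∈ Set.Icc (0:ℝ) ybar, 0 < deriv (deriv f) y)
    (hg'' : ∀ y ∈ Set.Icc (0:ℝ) ybar, deriv (deriv g) y < 0) :
    (∫ y in (0:ℝ)..ybar,
        4 / (deriv (deriv f) y - deriv (deriv g) y) *
          (1 + ((deriv f y - deriv g y) / 2) ^ 2) ^ 2) ≤
      (∫ y in (0:ℝ)..ybar,
        ((1 + deriv f y ^ 2) ^ 2 / deriv (deriv f) y +
          (1 + deriv g y ^ 2) ^ 2 / (-deriv (deriv g) y))) ∧
    ((∫ y in (0:ℝ)..ybar,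
        4 / (deriv (deriv f) y - deriv (deriv g) y) *
          (1 + ((deriv f y - deriv g y) / 2) ^ 2) ^ 2) =
      (∫ y in (0:ℝ)..ybar,
        ((1 + deriv f y ^ 2) ^ 2 / deriv (deriv f) y +
          (1 + deriv g y ^ 2) ^ 2 / (-deriv (deriv g) y))) ↔
      ∀ y ∈ Set.Icc (0:ℝ) ybar,
        deriv f y = -deriv g y ∧ deriv (deriv f) y = -deriv (deriv g) y) := by
  have cf1 : Continuous (deriv f) := hf.continuous_deriv (by norm_num)
  have cg1 : Continuous (deriv g) := hg.continuous_deriv (by norm_num)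
  have cf2 : Continuous (deriv (deriv f)) :=
    (ContDiff.deriv' (n := 1) (by simpa [one_add_one_eq_two] using hf)).continuous_deriv le_rfl
  have cg2 : Continuous (deriv (deriv g)) :=
    (ContDiff.deriv' (n := 1) (by simpa [one_add_one_eq_two] using hg)).continuous_deriv le_rfl
  have cL : ContinuousOn (fun y => 4 / (deriv (deriv f) y - deriv (deriv g) y) *
          (1 + ((deriv f y - deriv g y) / 2) ^ 2) ^ 2) (Icc 0 ybar) := by
    refine ContinuousOn.mul (ContinuousOn.div (by fun_prop) (by fun_prop) ?_) (by fun_prop)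
    intro y hy
    have := hf'' y hy
    have := hg'' y hy
    linarith
  have cR : ContinuousOn (fun y => ((1 + deriv f y ^ 2) ^ 2 / deriv (deriv f) y +
          (1 + deriv g y ^ 2) ^ 2 / (-deriv (deriv g) y))) (Icc 0 ybar) := by
    refine ContinuousOn.add (ContinuousOn.div (by fun_prop) (by fun_prop) ?_)
      (ContinuousOn.div (by fun_prop) (by fun_prop) ?_)
    · intro y hy
      exact (hf'' y hy).ne'
    · intro y hy
      exact neg_ne_zero.2 (hg'' y hy).ne
  have hle : ∀ y ∈ Icc 0 ybar, _ := fun y hy =>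
    aux_le (deriv f y) (deriv g y) _ _ (hf'' y hy) (hg'' y hy)
  refine ⟨intervalIntegral.integral_mono_on hybar.le
    (cL.intervalIntegrable_of_Icc hybar.le) (cR.intervalIntegrable_of_Icc hybar.le) hle, ?_, ?_⟩
  · intro he y hy
    by_contra hne
    refine absurd he (ne_of_lt ?_)
    refine intervalIntegral.integral_lt_integral_of_continuousOn_of_le_of_exists_lt hybar cL cR
      (fun x hx => hle x (Ioc_subset_Icc_self hx)) ⟨y, hy, ?_⟩
    by_contra hlt
    exact hne (aux_eq_s8 _ _ _ _ (hf'' y hy) (hg'' y hy) (not_lt.1 hlt))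
  · intro h
    refine intervalIntegral.integral_congr fun y hy => ?_
    rw [uIcc_of_le hybar.le] at hy
    obtain ⟨h1, h2⟩ := h y hy
    have h3 := (hg'' y hy).ne
    simp only [h1, h2]
    field_simp
    ring
end

section
/- Fix x₀ > 0 and L > 3x₀, let γ be the critical curve with curvature H and normal N = γ̇^⊥, and let λ = 2L/(L+x₀). Let φ ∈ C^∞([0,2L], ℝ) with φ(0) = φ(2L) = 0 and φ̇(0) = φ̇(2L) = 0, set γ_t = γ + tφN, and define G(t) = ∫₀^{2L} |γ̇_t(s)|⁴/⟨γ̇_t(s), γ̈_t(s)^⊥⟩ ds − λ·(1/2)∫₀^{2L} ⟨γ_t(s), γ̇_t(s)^⊥⟩ ds (well defined for |t| small). Then G is twice differentiable at t = 0 and G''(0) = ∫₀^{2L} ((2−λ)H(s)φ(s)² − 2φ̇(s)²/H(s) + 2φ̈(s)²/H(s)³) ds. -/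
open Real Set Filter

/-- first component of `φN`, where `N = γ̇^⊥ = (ẏ, −ẋ)` -/
noncomputable def Pn (x0 L : ℝ) (φ : ℝ → ℝ) (s : ℝ) : ℝ := φ s * deriv (yc x0 L) s

/-- second component of `φN` -/
noncomputable def Qn (x0 L : ℝ) (φ : ℝ → ℝ) (s : ℝ) : ℝ := -φ s * deriv (xc x0 L) s

/-- `G(t) = ∫₀^{2L} |γ̇_t|⁴/⟨γ̇_t, γ̈_t^⊥⟩ ds − λ·(1/2)∫₀^{2L} ⟨γ_t, γ̇_t^⊥⟩ ds`
for `γ_t = γ + tφN` and `λ = 2L/(L+x₀)` -/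
noncomputable def Gvar (x0 L : ℝ) (φ : ℝ → ℝ) (t : ℝ) : ℝ :=
  (∫ s in (0:ℝ)..(2 * L),
    ((deriv (xc x0 L) s + t * deriv (Pn x0 L φ) s) ^ 2 +
        (deriv (yc x0 L) s + t * deriv (Qn x0 L φ) s) ^ 2) ^ 2 /
      ((deriv (xc x0 L) s + t * deriv (Pn x0 L φ) s) *
          (deriv (deriv (yc x0 L)) s + t * deriv (deriv (Qn x0 L φ)) s) -
        (deriv (yc x0 L) s + t * deriv (Qn x0 L φ) s) *
          (deriv (deriv (xc x0 L)) s + t * deriv (deriv (Pn x0 L φ)) s))) -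
  2 * L / (L + x0) *
    (1 / 2 * ∫ s in (0:ℝ)..(2 * L),
      ((xc x0 L s + t * Pn x0 L φ s) * (deriv (yc x0 L) s + t * deriv (Qn x0 L φ) s) -
        (yc x0 L s + t * Qn x0 L φ s) * (deriv (xc x0 L) s + t * deriv (Pn x0 L φ) s)))

lemma aux_hd {f g : ℝ → ℝ} {f' g' x : ℝ} (h : HasDerivAt f f' x) (hf : ∀ t, g t = f t)
    (h' : g' = f') : HasDerivAt g g' x := by
  obtain rfl : g = f := funext hf
  rw [h']; exact h

lemma aux_deriv_int (a b ε : ℝ) (hab : a ≤ b) (f f1 : ℝ → ℝ → ℝ)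
    (hc : ∀ t ∈ Icc (-ε) ε, ContinuousOn (f t) (Icc a b))
    (hc1 : ContinuousOn (fun z : ℝ × ℝ => f1 z.1 z.2) (Icc (-ε) ε ×ˢ Icc a b))
    (hd : ∀ t ∈ Icc (-ε) ε, ∀ s ∈ Icc a b, HasDerivAt (fun t => f t s) (f1 t s) t) :
    ∀ t ∈ Ioo (-ε) ε, HasDerivAt (fun t => ∫ s in a..b, f t s) (∫ s in a..b, f1 t s) t := by
  intro t ht
  have hn : Icc (-ε) ε ∈ nhds t := Icc_mem_nhds ht.1 ht.2
  obtain ⟨C, hC⟩ := (isCompact_Icc.prod isCompact_Icc).exists_bound_of_continuousOn hc1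
  have hsub : Set.uIoc a b ⊆ Icc a b := by
    rw [Set.uIoc_of_le hab]; exact Ioc_subset_Icc_self
  have hc1t : ContinuousOn (f1 t) (Icc a b) := by
    have : ContinuousOn (fun s => ((t, s) : ℝ × ℝ)) (Icc a b) := by fun_prop
    exact hc1.comp this (fun s hs => ⟨Ioo_subset_Icc_self ht, hs⟩)
  refine (intervalIntegral.hasDerivAt_integral_of_dominated_loc_of_deriv_le
    (bound := fun _ => C) hn ?_ ?_ ?_ ?_ ?_ ?_).2
  · filter_upwards [hn] with r hr
    exact ((hc r hr).mono hsub).aestronglyMeasurable measurableSet_uIoc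
  · apply ContinuousOn.intervalIntegrable
    rw [Set.uIcc_of_le hab]
    exact hc t (Ioo_subset_Icc_self ht)
  · exact (hc1t.mono hsub).aestronglyMeasurable measurableSet_uIoc
  · exact Eventually.of_forall (fun s hs r hr => hC (r, s) ⟨hr, hsub hs⟩)
  · exact intervalIntegrable_const
  · exact Eventually.of_forall (fun s hs r hr => hd r hr s (hsub hs))

lemma aux_quot (b : ℝ) (hb : 0 ≤ b) (p q H d1 d2 : ℝ → ℝ)
    (hp : ContinuousOn p (Icc 0 b)) (hq : ContinuousOn q (Icc 0 b))
    (hH : ContinuousOn H (Icc 0 b)) (hd1 : ContinuousOn d1 (Icc 0 b))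
    (hd2 : ContinuousOn d2 (Icc 0 b)) (hpos : ∀ s ∈ Icc 0 b, 0 < H s) :
    ∃ G' : ℝ → ℝ,
      (∀ᶠ t in nhds (0:ℝ), HasDerivAt (fun t => ∫ s in (0:ℝ)..b,
        ((1 + t * p s) ^ 2 + (t * q s) ^ 2) ^ 2 / (H s + t * d1 s + t ^ 2 * d2 s)) (G' t) t) ∧
      HasDerivAt G' (∫ s in (0:ℝ)..b,
        ((12 * p s ^ 2 + 4 * q s ^ 2) / H s - 8 * p s * d1 s / H s ^ 2
          + 2 * d1 s ^ 2 / H s ^ 3 - 2 * d2 s / H s ^ 2)) 0 := by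
  obtain ⟨M1, hM1⟩ := isCompact_Icc.exists_bound_of_continuousOn hd1
  obtain ⟨M2, hM2⟩ := isCompact_Icc.exists_bound_of_continuousOn hd2
  obtain ⟨s0, hs0, hmin⟩ := isCompact_Icc.exists_isMinOn (nonempty_Icc.2 hb) hH
  set m := H s0 with hm
  have hm0 : 0 < m := hpos s0 hs0
  have hM10 : 0 ≤ M1 := (norm_nonneg _).trans (hM1 s0 hs0)
  have hM20 : 0 ≤ M2 := (norm_nonneg _).trans (hM2 s0 hs0)
  obtain ⟨ε, hε, hε1, hε2⟩ : ∃ ε : ℝ, 0 < ε ∧ ε ≤ 1 ∧ ε * (M1 + M2) < m := by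
    refine ⟨min 1 (m / (M1 + M2 + 1)), by positivity, min_le_left _ _, ?_⟩
    have h1 : min 1 (m / (M1 + M2 + 1)) ≤ m / (M1 + M2 + 1) := min_le_right _ _
    have h2 : m / (M1 + M2 + 1) * (M1 + M2) < m := by
      rw [div_mul_eq_mul_div, div_lt_iff₀ (by positivity)]
      nlinarith
    exact lt_of_le_of_lt (mul_le_mul_of_nonneg_right h1 (by positivity)) h2
  have hD : ∀ t ∈ Icc (-ε) ε, ∀ s ∈ Icc 0 b, H s + t * d1 s + t ^ 2 * d2 s ≠ 0 := by
    intro t ht s hs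
    have ha : |t| ≤ ε := abs_le.2 ht
    have h1 : |t * d1 s| ≤ ε * M1 := by
      rw [abs_mul]; exact mul_le_mul ha (hM1 s hs) (abs_nonneg _) hε.le
    have h2 : |t ^ 2 * d2 s| ≤ ε * M2 := by
      rw [abs_mul]
      refine mul_le_mul ?_ (hM2 s hs) (abs_nonneg _) hε.le
      rw [abs_pow]; nlinarith [abs_nonneg t]
    have h3 : m ≤ H s := hmin hs
    have := (abs_le.1 h1).1
    have := (abs_le.1 h2).1
    have : 0 < H s + t * d1 s + t ^ 2 * d2 s := by linarith
    exact this.ne'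
  have cp : ContinuousOn (fun z : ℝ × ℝ => p z.2) (Icc (-ε) ε ×ˢ Icc 0 b) :=
    hp.comp continuousOn_snd (fun z hz => hz.2)
  have cq : ContinuousOn (fun z : ℝ × ℝ => q z.2) (Icc (-ε) ε ×ˢ Icc 0 b) :=
    hq.comp continuousOn_snd (fun z hz => hz.2)
  have cH : ContinuousOn (fun z : ℝ × ℝ => H z.2) (Icc (-ε) ε ×ˢ Icc 0 b) :=
    hH.comp continuousOn_snd (fun z hz => hz.2)
  have c1 : ContinuousOn (fun z : ℝ × ℝ => d1 z.2) (Icc (-ε) ε ×ˢ Icc 0 b) :=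
    hd1.comp continuousOn_snd (fun z hz => hz.2)
  have c2 : ContinuousOn (fun z : ℝ × ℝ => d2 z.2) (Icc (-ε) ε ×ˢ Icc 0 b) :=
    hd2.comp continuousOn_snd (fun z hz => hz.2)
  have ms : MapsTo (fun z : ℝ × ℝ => z.2) (Icc (-ε) ε ×ˢ Icc 0 b) (Icc 0 b) := fun z hz => hz.2
  let D : ℝ → ℝ → ℝ := fun t s => H s + t * d1 s + t ^ 2 * d2 s
  let D' : ℝ → ℝ → ℝ := fun t s => d1 s + 2 * t * d2 s
  let R : ℝ → ℝ → ℝ := fun t s => (1 + t * p s) ^ 2 + (t * q s) ^ 2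
  let R' : ℝ → ℝ → ℝ := fun t s => 2 * (1 + t * p s) * p s + 2 * (t * q s) * q s
  let R'' : ℝ → ℝ := fun s => 2 * p s ^ 2 + 2 * q s ^ 2
  have hDd : ∀ t s, HasDerivAt (fun t => D t s) (D' t s) t := by
    intro t s
    have := (((hasDerivAt_id t).mul_const (d1 s)).const_add (H s)).add
      (((hasDerivAt_id t).pow 2).mul_const (d2 s))
    refine aux_hd this (fun r => rfl) ?_
    simp [D']
  have hDd' : ∀ t s, HasDerivAt (fun t => D' t s) (2 * d2 s) t := by
    intro t s
    have := (((hasDerivAt_id t).const_mul 2).mul_const (d2 s)).const_add (d1 s)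
    refine aux_hd this (fun r => rfl) ?_
    simp
  have hRd : ∀ t s, HasDerivAt (fun t => R t s) (R' t s) t := by
    intro t s
    have := ((((hasDerivAt_id t).mul_const (p s)).const_add 1).pow 2).add
      (((hasDerivAt_id t).mul_const (q s)).pow 2)
    refine aux_hd this (fun r => rfl) ?_
    simp [R']
  have hRd' : ∀ t s, HasDerivAt (fun t => R' t s) (R'' s) t := by
    intro t s
    have := (((((hasDerivAt_id t).mul_const (p s)).const_add 1).const_mul 2).mul_const (p s)).add
      ((((hasDerivAt_id t).mul_const (q s)).const_mul 2).mul_const (q s))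
    refine aux_hd this (fun r => rfl) ?_
    simp [R'']; ring
  let f1 : ℝ → ℝ → ℝ := fun t s => (2 * R t s * R' t s * D t s - R t s ^ 2 * D' t s) / D t s ^ 2
  let f2 : ℝ → ℝ → ℝ := fun t s =>
    ((2 * R' t s * R' t s * D t s + 2 * R t s * R'' s * D t s + 2 * R t s * R' t s * D' t s
      - (2 * R t s * R' t s * D' t s + R t s ^ 2 * (2 * d2 s))) * D t s ^ 2
      - (2 * R t s * R' t s * D t s - R t s ^ 2 * D' t s) * (2 * D t s * D' t s)) / (D t s ^ 2) ^ 2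
  have hD2 : ∀ t ∈ Icc (-ε) ε, ∀ s ∈ Icc 0 b, D t s ≠ 0 := hD
  have hf1 : ∀ t ∈ Icc (-ε) ε, ∀ s ∈ Icc 0 b,
      HasDerivAt (fun t => R t s ^ 2 / D t s) (f1 t s) t := by
    intro t ht s hs
    have := ((hRd t s).pow 2).div (hDd t s) (hD2 t ht s hs)
    refine aux_hd this (fun r => rfl) ?_
    simp [f1]
  have hf2 : ∀ t ∈ Icc (-ε) ε, ∀ s ∈ Icc 0 b,
      HasDerivAt (fun t => f1 t s) (f2 t s) t := by
    intro t ht s hs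
    have := (((((hRd t s).const_mul 2).mul (hRd' t s)).mul (hDd t s)).sub
      (((hRd t s).pow 2).mul (hDd' t s))).div ((hDd t s).pow 2) (pow_ne_zero 2 (hD2 t ht s hs))
    refine aux_hd this (fun r => rfl) ?_
    simp [f2]; ring
  have cD : ContinuousOn (fun z : ℝ × ℝ => D z.1 z.2) (Icc (-ε) ε ×ˢ Icc 0 b) := by
    simp only [D]; fun_prop (disch := assumption)
  have cD' : ContinuousOn (fun z : ℝ × ℝ => D' z.1 z.2) (Icc (-ε) ε ×ˢ Icc 0 b) := by
    simp only [D']; fun_prop (disch := assumption)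
  have cR : ContinuousOn (fun z : ℝ × ℝ => R z.1 z.2) (Icc (-ε) ε ×ˢ Icc 0 b) := by
    simp only [R]; fun_prop (disch := assumption)
  have cR' : ContinuousOn (fun z : ℝ × ℝ => R' z.1 z.2) (Icc (-ε) ε ×ˢ Icc 0 b) := by
    simp only [R']; fun_prop (disch := assumption)
  have cR'' : ContinuousOn (fun z : ℝ × ℝ => R'' z.2) (Icc (-ε) ε ×ˢ Icc 0 b) := by
    simp only [R'']; fun_prop (disch := assumption)
  have cf : ContinuousOn (fun z : ℝ × ℝ => R z.1 z.2 ^ 2 / D z.1 z.2)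
      (Icc (-ε) ε ×ˢ Icc 0 b) :=
    (cR.pow 2).div cD (fun z hz => hD2 _ hz.1 _ hz.2)
  have cf1 : ContinuousOn (fun z : ℝ × ℝ => f1 z.1 z.2) (Icc (-ε) ε ×ˢ Icc 0 b) := by
    simp only [f1]
    refine ContinuousOn.div (by fun_prop (disch := assumption)) (by fun_prop (disch := assumption))
      (fun z hz => pow_ne_zero 2 (hD2 _ hz.1 _ hz.2))
  have cf2 : ContinuousOn (fun z : ℝ × ℝ => f2 z.1 z.2) (Icc (-ε) ε ×ˢ Icc 0 b) := by
    have gen : ∀ (S : Set (ℝ × ℝ)) (r r1 r2 d d' e : ℝ × ℝ → ℝ), ContinuousOn r S →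
        ContinuousOn r1 S → ContinuousOn r2 S → ContinuousOn d S → ContinuousOn d' S →
        ContinuousOn e S → ContinuousOn (fun z =>
          (2 * r1 z * r1 z * d z + 2 * r z * r2 z * d z + 2 * r z * r1 z * d' z
      - (2 * r z * r1 z * d' z + r z ^ 2 * (2 * e z))) * d z ^ 2
      - (2 * r z * r1 z * d z - r z ^ 2 * d' z) * (2 * d z * d' z)) S := by
      intro S r r1 r2 d d' e h1 h2 h3 h4 h5 h6
      fun_prop
    exact ContinuousOn.div (gen _ _ _ _ _ _ _ cR cR' cR'' cD cD' c2) ((cD.pow 2).pow 2)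
      (fun z hz => pow_ne_zero 2 (pow_ne_zero 2 (hD2 _ hz.1 _ hz.2)))
  have sl : ∀ g : ℝ → ℝ → ℝ, ContinuousOn (fun z : ℝ × ℝ => g z.1 z.2) (Icc (-ε) ε ×ˢ Icc 0 b) →
      ∀ t ∈ Icc (-ε) ε, ContinuousOn (g t) (Icc 0 b) := by
    intro g hg t ht
    have : ContinuousOn (fun s => ((t, s) : ℝ × ℝ)) (Icc 0 b) := by fun_prop
    exact hg.comp this (fun s hs => ⟨ht, hs⟩)
  refine ⟨fun t => ∫ s in (0:ℝ)..b, f1 t s, ?_, ?_⟩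
  · filter_upwards [Ioo_mem_nhds (neg_lt_zero.2 hε) hε] with t ht
    exact aux_deriv_int 0 b ε hb (fun t s => R t s ^ 2 / D t s) f1 (sl _ cf) cf1 hf1 t ht
  · have := aux_deriv_int 0 b ε hb f1 f2 (sl _ cf1) cf2 hf2 0 ⟨neg_lt_zero.2 hε, hε⟩
    convert this using 1
    apply intervalIntegral.integral_congr
    intro s hs
    rw [uIcc_of_le hb] at hs
    have := (hpos s hs).ne'
    simp only [f2, R, R', R'', D, D', zero_mul, add_zero, mul_zero, ne_eq, OfNat.ofNat_ne_zero, not_false_eq_true, zero_pow, mul_one, one_pow, one_mul]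
    field_simp
    ring

lemma aux_quad (b : ℝ) (hb : 0 ≤ b) (e0 e1 e2 : ℝ → ℝ)
    (h0 : ContinuousOn e0 (Icc 0 b)) (h1 : ContinuousOn e1 (Icc 0 b))
    (h2 : ContinuousOn e2 (Icc 0 b)) :
    ∃ G' : ℝ → ℝ,
      (∀ t, HasDerivAt (fun t => ∫ s in (0:ℝ)..b, (e0 s + t * e1 s + t ^ 2 * e2 s)) (G' t) t) ∧
      HasDerivAt G' (∫ s in (0:ℝ)..b, 2 * e2 s) 0 := by
  have i : ∀ g : ℝ → ℝ, ContinuousOn g (Icc 0 b) →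
      IntervalIntegrable g MeasureTheory.volume 0 b := by
    intro g hg
    apply ContinuousOn.intervalIntegrable
    rwa [uIcc_of_le hb]
  have i0 := i _ h0
  have i1 := i _ h1
  have i2 := i _ h2
  have he : (fun t : ℝ => ∫ s in (0:ℝ)..b, (e0 s + t * e1 s + t ^ 2 * e2 s)) =
      fun t => (∫ s in (0:ℝ)..b, e0 s) + t * (∫ s in (0:ℝ)..b, e1 s)
        + t ^ 2 * ∫ s in (0:ℝ)..b, e2 s := by
    funext t
    rw [intervalIntegral.integral_add (i0.add (i1.const_mul t)) (i2.const_mul _),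
      intervalIntegral.integral_add i0 (i1.const_mul t), intervalIntegral.integral_const_mul,
      intervalIntegral.integral_const_mul]
  rw [he, intervalIntegral.integral_const_mul]
  generalize (∫ s in (0:ℝ)..b, e0 s) = A
  generalize (∫ s in (0:ℝ)..b, e1 s) = B
  generalize (∫ s in (0:ℝ)..b, e2 s) = C
  refine ⟨fun t => B + 2 * t * C, fun t => ?_, ?_⟩
  · have := (((hasDerivAt_id t).mul_const B).const_add A).add
      (((hasDerivAt_id t).pow 2).mul_const C)
    refine aux_hd this (fun r => rfl) ?_
    simp
  · have := (((hasDerivAt_id (0:ℝ)).const_mul 2).mul_const C).const_add B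
    refine aux_hd this (fun r => rfl) ?_
    simp

lemma aux_core (b lam : ℝ) (hb : 0 ≤ b) (x y X Y H Hd φ : ℝ → ℝ) (U : Set ℝ) (hU : IsOpen U)
    (hbU : Icc 0 b ⊆ U)
    (hx : ∀ s ∈ U, HasDerivAt x (X s) s) (hy : ∀ s ∈ U, HasDerivAt y (Y s) s)
    (hX : ∀ s ∈ U, HasDerivAt X (-(H s * Y s)) s) (hY : ∀ s ∈ U, HasDerivAt Y (H s * X s) s)
    (hH : ∀ s ∈ U, HasDerivAt H (Hd s) s) (hHd : ContinuousOn Hd U)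
    (hXY : ∀ s, X s ^ 2 + Y s ^ 2 = 1) (hpos : ∀ s ∈ U, 0 < H s)
    (hφ : ContDiff ℝ (⊤ : ℕ∞) φ) (hb0 : φ 0 = 0) (hb1 : φ b = 0) (P Q : ℝ → ℝ)
    (hP : P = fun s => φ s * deriv y s) (hQ : Q = fun s => -φ s * deriv x s) :
    ∃ G' : ℝ → ℝ,
      (∀ᶠ t in nhds (0:ℝ), HasDerivAt (fun t => (∫ s in (0:ℝ)..b,
    ((deriv x s + t * deriv P s) ^ 2 +
        (deriv y s + t * deriv Q s) ^ 2) ^ 2 /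
      ((deriv x s + t * deriv P s) *
          (deriv (deriv y) s + t * deriv (deriv Q) s) -
        (deriv y s + t * deriv Q s) *
          (deriv (deriv x) s + t * deriv (deriv P) s))) -
  lam *
    (1 / 2 * ∫ s in (0:ℝ)..b,
      ((x s + t * P s) * (deriv y s + t * deriv Q s) -
        (y s + t * Q s) * (deriv x s + t * deriv P s)))) (G' t) t) ∧
      HasDerivAt G'
        (∫ s in (0:ℝ)..b,
          ((2 - lam) * H s * φ s ^ 2 -
            2 * deriv φ s ^ 2 / H s +
            2 * deriv (deriv φ) s ^ 2 / H s ^ 3))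
        0 := by
  have dφ : ∀ s, HasDerivAt φ (deriv φ s) s := fun s =>
    (hφ.differentiable (by simp)).differentiableAt.hasDerivAt
  have hφ' : ContDiff ℝ (⊤ : ℕ∞) (deriv φ) := by
    exact (contDiff_infty_iff_deriv.1 hφ).2
  have hφ'' : ContDiff ℝ (⊤ : ℕ∞) (deriv (deriv φ)) := by
    exact (contDiff_infty_iff_deriv.1 hφ').2
  have dφ' : ∀ s, HasDerivAt (deriv φ) (deriv (deriv φ) s) s := fun s =>
    (hφ'.differentiable (by simp)).differentiableAt.hasDerivAt
  have tr : ∀ f g h : ℝ → ℝ, (∀ s ∈ U, f s = g s) → (∀ s ∈ U, HasDerivAt g (h s) s) →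
      ∀ s ∈ U, deriv f s = h s := by
    intro f g h hfg hg s hs
    have : f =ᶠ[nhds s] g := by
      filter_upwards [hU.mem_nhds hs] with r hr using hfg r hr
    rw [this.deriv_eq, (hg s hs).deriv]
  have ex := tr x x X (fun _ _ => rfl) hx
  have ey := tr y y Y (fun _ _ => rfl) hy
  have ex2 := tr _ X _ ex hX
  have ey2 := tr _ Y _ ey hY
  have eP := tr P (fun s => φ s * Y s) (fun s => deriv φ s * Y s + φ s * (H s * X s))
    (fun s hs => by rw [hP]; simp only [ey s hs]) (fun s hs => (dφ s).mul (hY s hs))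
  have eQ := tr Q (fun s => -φ s * X s) (fun s => -deriv φ s * X s + -φ s * -(H s * Y s))
    (fun s hs => by rw [hQ]; simp only [ex s hs]) (fun s hs => (dφ s).neg.mul (hX s hs))
  have eP2 := tr _ _ _ eP (fun s hs => ((dφ' s).mul (hY s hs)).add
    ((dφ s).mul ((hH s hs).mul (hX s hs))))
  have eQ2 := tr _ _ _ eQ (fun s hs => ((dφ' s).neg.mul (hX s hs)).add
    ((dφ s).neg.mul ((hH s hs).mul (hY s hs)).neg))
  have cφ : ContinuousOn φ (Icc 0 b) := hφ.continuous.continuousOn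
  have cφ' : ContinuousOn (deriv φ) (Icc 0 b) := hφ'.continuous.continuousOn
  have cφ'' : ContinuousOn (deriv (deriv φ)) (Icc 0 b) := hφ''.continuous.continuousOn
  have cc : ∀ g h : ℝ → ℝ, (∀ s ∈ U, HasDerivAt g (h s) s) → ContinuousOn g (Icc 0 b) :=
    fun g h hg s hs => (hg s (hbU hs)).continuousAt.continuousWithinAt
  have cx := cc _ _ hx
  have cy := cc _ _ hy
  have cX := cc _ _ hX
  have cY := cc _ _ hY
  have cH := cc _ _ hH
  have cHd := hHd.mono hbU
  obtain ⟨G1, hG1, hG1'⟩ := aux_quot b hb (fun s => φ s * H s) (fun s => deriv φ s) H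
    (fun s => 2 * φ s * H s ^ 2 - deriv (deriv φ) s)
    (fun s => φ s ^ 2 * H s ^ 3 - φ s * deriv (deriv φ) s * H s + deriv φ s * φ s * Hd s
      + 2 * deriv φ s ^ 2 * H s)
    (by fun_prop) (by fun_prop) cH (by fun_prop) (by fun_prop) (fun s hs => hpos s (hbU hs))
  obtain ⟨G2, hG2, hG2'⟩ := aux_quad b hb (fun s => x s * Y s - y s * X s)
    (fun s => φ s * (Y s ^ 2 + X s ^ 2) + x s * (-deriv φ s * X s + -φ s * -(H s * Y s))
      - y s * (deriv φ s * Y s + φ s * (H s * X s)))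
    (fun s => φ s ^ 2 * H s) (by fun_prop) (by fun_prop) (by fun_prop)
  refine ⟨fun t => G1 t - lam * (1 / 2 * G2 t), ?_, ?_⟩
  · filter_upwards [hG1] with t ht
    refine aux_hd (ht.sub (((hG2 t).const_mul (1 / 2)).const_mul lam)) (fun r => ?_) rfl
    simp only [Pi.sub_apply]
    congr 1
    · apply intervalIntegral.integral_congr
      intro s hs
      rw [uIcc_of_le hb] at hs
      have hs := hbU hs
      simp only [ex s hs, ey s hs, ex2 s hs, ey2 s hs, eP s hs, eQ s hs, eP2 s hs, eQ2 s hs,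
        Pi.neg_apply]
      have hq : X s ^ 2 = 1 - Y s ^ 2 := by linarith [hXY s]
      congr 1
      · congr 1
        linear_combination ((1 + r * (φ s * H s)) ^ 2 + (r * deriv φ s) ^ 2) * hXY s
      · linear_combination (H s + r * (2 * φ s * H s ^ 2 - deriv (deriv φ) s) + r ^ 2 *
          (φ s ^ 2 * H s ^ 3 - φ s * deriv (deriv φ) s * H s + deriv φ s * φ s * Hd s
      + 2 * deriv φ s ^ 2 * H s)) * hXY s
    · congr 2
      apply intervalIntegral.integral_congr
      intro s hs
      rw [uIcc_of_le hb] at hs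
      have hs := hbU hs
      simp only [ex s hs, ey s hs, eP s hs, eQ s hs]
      simp only [hP, hQ, ex s hs, ey s hs]
      linear_combination (r ^ 2 * φ s ^ 2 * H s) * hXY s
  · refine aux_hd (hG1'.sub ((hG2'.const_mul (1 / 2)).const_mul lam)) (fun r => rfl) ?_
    have hne : ∀ s ∈ Icc 0 b, H s ≠ 0 := fun s hs => (hpos s (hbU hs)).ne'
    have i : ∀ g : ℝ → ℝ, ContinuousOn g (Icc 0 b) →
        IntervalIntegrable g MeasureTheory.volume 0 b := by
      intro g hg
      apply ContinuousOn.intervalIntegrable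
      rwa [uIcc_of_le hb]
    have hz : ∫ s in (0:ℝ)..b, ((deriv φ s * deriv φ s + φ s * deriv (deriv φ) s) * H s
        - φ s * deriv φ s * Hd s) / H s ^ 2 = 0 := by
      rw [intervalIntegral.integral_eq_sub_of_hasDerivAt
        (f := fun s => φ s * deriv φ s / H s)]
      · simp [hb0, hb1]
      · intro s hs
        rw [uIcc_of_le hb] at hs
        exact ((dφ s).mul (dφ' s)).div (hH s (hbU hs)) (hne s hs)
      · apply i
        exact ContinuousOn.div (by fun_prop) (by fun_prop) (fun s hs => pow_ne_zero 2 (hne s hs))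
    rw [← intervalIntegral.integral_const_mul, ← intervalIntegral.integral_const_mul,
      ← intervalIntegral.integral_sub, ← sub_eq_zero, ← intervalIntegral.integral_sub]
    · refine Eq.trans ?_ ((intervalIntegral.integral_const_mul (-2 : ℝ) _).trans (by rw [hz, mul_zero]))
      apply intervalIntegral.integral_congr
      intro s hs
      rw [uIcc_of_le hb] at hs
      have := hne s hs
      simp only
      field_simp
      ring
    all_goals
      apply i
      fun_prop (disch := first | assumption | (intro s hs; exact pow_ne_zero _ (hne s hs)))

lemma aux_geo (x0 L s : ℝ) (hσ : 0 < sig x0 L) (hσ' : sig x0 L < π) (hκ : 0 < kap x0 L)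
    (hs : (s - L) ^ 2 < kap x0 L ^ 2) :
    HasDerivAt (xc x0 L) (-cos (π / sig x0 L * arcsin ((s - L) / kap x0 L))) s ∧
    HasDerivAt (yc x0 L) (-sin (π / sig x0 L * arcsin ((s - L) / kap x0 L))) s ∧
    HasDerivAt (fun s => π / sig x0 L * arcsin ((s - L) / kap x0 L)) (Hc x0 L s) s ∧
    HasDerivAt (Hc x0 L) (Hc x0 L s * (s - L) / (kap x0 L ^ 2 - (s - L) ^ 2)) s ∧
    0 < Hc x0 L s := by
  unfold xc yc Hc
  generalize π * x0 / (sig x0 L * Real.tan (sig x0 L)) = c0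
  generalize sig x0 L = σ at *
  generalize kap x0 L = κ at *
  have hw : 0 < κ ^ 2 - (s - L) ^ 2 := by linarith
  set v := √(κ ^ 2 - (s - L) ^ 2) with hv
  have hv0 : 0 < v := Real.sqrt_pos.2 hw
  have hv2 : v ^ 2 = κ ^ 2 - (s - L) ^ 2 := Real.sq_sqrt hw.le
  have hsq : √(1 - ((s - L) / κ) ^ 2) = v / κ := by
    rw [Real.sqrt_eq_iff_mul_self_eq (by
      rw [div_pow, sub_nonneg, div_le_one (by positivity)]; exact hs.le) (by positivity)]
    field_simp
    linarith
  have hlt := abs_lt_of_sq_lt_sq hs hκ.le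
  have ne1 : (s - L) / κ ≠ -1 := by
    rw [Ne, div_eq_iff hκ.ne']; intro h; rw [h] at hs; nlinarith
  have ne2 : (s - L) / κ ≠ 1 := by
    rw [Ne, div_eq_iff hκ.ne']; intro h; rw [h] at hs; nlinarith
  have hu : HasDerivAt (fun s => arcsin ((s - L) / κ)) (1 / v) s := by
    have h1 : HasDerivAt (fun s => (s - L) / κ) (1 / κ) s :=
      ((hasDerivAt_id s).sub_const L).div_const κ
    refine aux_hd ((Real.hasDerivAt_arcsin ne1 ne2).comp s h1) (fun r => rfl) ?_
    rw [hsq]; field_simp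
  have hcos : cos (arcsin ((s - L) / κ)) = v / κ := by rw [Real.cos_arcsin, hsq]
  have hps : π + σ ≠ 0 := by positivity
  have hms : π - σ ≠ 0 := by linarith
  have e1 : (π + σ) / σ * arcsin ((s - L) / κ) = π / σ * arcsin ((s - L) / κ) + arcsin ((s - L) / κ) := by
    field_simp
  have e2 : (π - σ) / σ * arcsin ((s - L) / κ) = π / σ * arcsin ((s - L) / κ) - arcsin ((s - L) / κ) := by
    field_simp
  refine ⟨?_, ?_, ?_, ?_, ?_⟩
  · have := (((hu.const_mul ((π + σ) / σ)).sin.const_mul (σ / (π + σ))).add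
      ((hu.const_mul ((π - σ) / σ)).sin.const_mul (σ / (π - σ)))).const_mul (-(κ / 2))
    refine aux_hd this (fun r => rfl) ?_
    rw [e1, e2, cos_add, cos_sub, hcos]
    field_simp
    ring
  · have := ((((hu.const_mul ((π + σ) / σ)).cos.const_mul (σ / (π + σ))).add
      ((hu.const_mul ((π - σ) / σ)).cos.const_mul (σ / (π - σ)))).const_mul (κ / 2)).add_const c0
    refine aux_hd this (fun r => rfl) ?_
    rw [e1, e2, sin_add, sin_sub, hcos]
    field_simp
    ring
  · refine aux_hd (hu.const_mul (π / σ)) (fun r => rfl) ?_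
    field_simp
  · have h1 : HasDerivAt (fun s => κ ^ 2 - (s - L) ^ 2) (-(2 * (s - L))) s := by
      refine aux_hd ((((hasDerivAt_id s).sub_const L).pow 2).const_sub (κ ^ 2)) (fun r => rfl) ?_
      simp
    have h2 := ((h1.sqrt hw.ne').const_mul σ)
    have h3 := (hasDerivAt_const s π).div h2 (by positivity)
    refine aux_hd h3 (fun r => rfl) ?_
    rw [← hv, ← hv2]
    field_simp
    ring
  · positivity

/-- second variation of the penalized functional `F − λA` at the critical curve,
for a normal geodesic variation `γ_t = γ + tφN`. -/
theorem statement12 (x0 L : ℝ) (hx0 : 0 < x0) (hL : 3 * x0 < L) (φ : ℝ → ℝ)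
    (hφ : ContDiff ℝ (⊤ : ℕ∞) φ)
    (hb0 : φ 0 = 0) (hb1 : φ (2 * L) = 0)
    (hb2 : deriv φ 0 = 0) (hb3 : deriv φ (2 * L) = 0) :
    ∃ G' : ℝ → ℝ,
      (∀ᶠ t in nhds (0:ℝ), HasDerivAt (Gvar x0 L φ) (G' t) t) ∧
      HasDerivAt G'
        (∫ s in (0:ℝ)..(2 * L),
          ((2 - 2 * L / (L + x0)) * Hc x0 L s * φ s ^ 2 -
            2 * deriv φ s ^ 2 / Hc x0 L s +
            2 * deriv (deriv φ) s ^ 2 / Hc x0 L s ^ 3))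
        0 := by
  have hq0 : 0 < x0 / (L + x0) := div_pos hx0 (by linarith)
  have hq1 : x0 / (L + x0) < (1 / 2) ^ 2 := by
    rw [div_lt_iff₀ (by linarith)]; linarith
  have hσ : 0 < sig x0 L := mul_pos pi_pos (Real.sqrt_pos.2 hq0)
  have hσ2 : sig x0 L < π / 2 := by
    have : √(x0 / (L + x0)) < 1 / 2 := (Real.sqrt_lt' (by norm_num)).2 hq1
    unfold sig
    nlinarith [pi_pos]
  have hLpos : 0 < L := by linarith
  have hsin : 0 < sin (sig x0 L) := sin_pos_of_pos_of_lt_pi hσ (by linarith [pi_pos])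
  have hsin1 : sin (sig x0 L) < 1 := by
    rw [← sin_pi_div_two]
    exact sin_lt_sin_of_lt_of_le_pi_div_two (by linarith [pi_pos]) le_rfl hσ2
  have hκL : L < kap x0 L := by
    unfold kap
    rw [lt_div_iff₀ hsin]; nlinarith
  have hκ : 0 < kap x0 L := hLpos.trans hκL
  have geo := fun s hs => aux_geo x0 L s hσ (by linarith [pi_pos]) hκ hs
  have hU : IsOpen {s : ℝ | (s - L) ^ 2 < kap x0 L ^ 2} :=
    isOpen_lt (by fun_prop) (by fun_prop)
  refine aux_core (2 * L) (2 * L / (L + x0)) (by linarith) (xc x0 L) (yc x0 L)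
    (fun s => -cos (π / sig x0 L * arcsin ((s - L) / kap x0 L)))
    (fun s => -sin (π / sig x0 L * arcsin ((s - L) / kap x0 L))) (Hc x0 L)
    (fun s => Hc x0 L s * (s - L) / (kap x0 L ^ 2 - (s - L) ^ 2)) φ
    {s : ℝ | (s - L) ^ 2 < kap x0 L ^ 2} hU ?_ (fun s hs => (geo s hs).1)
    (fun s hs => (geo s hs).2.1) ?_ ?_ (fun s hs => (geo s hs).2.2.2.1) ?_ ?_
    (fun s hs => (geo s hs).2.2.2.2) hφ hb0 hb1 (Pn x0 L φ) (Qn x0 L φ) rfl rfl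
  · intro s hs
    simp only [mem_ofPred_eq]
    have := hs.1
    have := hs.2
    nlinarith
  · intro s hs
    refine aux_hd (geo s hs).2.2.1.cos.neg (fun r => rfl) ?_
    ring
  · intro s hs
    refine aux_hd (geo s hs).2.2.1.sin.neg (fun r => rfl) ?_
    ring
  · have : ContinuousOn (Hc x0 L) {s : ℝ | (s - L) ^ 2 < kap x0 L ^ 2} :=
      fun s hs => (geo s hs).2.2.2.1.continuousAt.continuousWithinAt
    refine ContinuousOn.div (by fun_prop) (by fun_prop) ?_
    intro s hs
    exact (sub_pos.2 hs).ne'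
  · intro s
    simp only [neg_sq]
    exact cos_sq_add_sin_sq _
end

section
/- Fix x₀ > 0 and L > 3x₀ and let H, θ, λ be the associated critical data. Set μ₀ = −x₀/(L+x₀) + 2√(x₀/(L+x₀)) and α = (x₀/(L+x₀))^{1/4}. Then the functions u₃(s) = θ(s)·sin(α·θ(s)) and u₄(s) = θ(s)·cos(α·θ(s)) satisfy the homogeneous fourth-order equation (d²/ds²)(2H(s)⁻³·ü(s)) + μ₀·(d/ds)(2H(s)⁻¹·u̇(s)) + (2−λ)H(s)u(s) = 0 for all s ∈ (0,2L). -/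
open Real Set

/-- the angle function `θ(s) = (π/σ)(arcsin((s−L)/κ) + σ)` -/
noncomputable def th (x0 L s : ℝ) : ℝ :=
  π / sig x0 L * (Real.arcsin ((s - L) / kap x0 L) + sig x0 L)

/-- the fourth order operator `Lu = (2H⁻³ü)'' + μ(2H⁻¹u̇)' + (2−λ)Hu`,
with `λ = 2L/(L+x₀)` -/
noncomputable def Lop (x0 L μ : ℝ) (u : ℝ → ℝ) (s : ℝ) : ℝ :=
  deriv (deriv fun t => 2 / Hc x0 L t ^ 3 * deriv (deriv u) t) s +
    μ * deriv (fun t => 2 / Hc x0 L t * deriv u t) s +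
    (2 - 2 * L / (L + x0)) * Hc x0 L s * u s


lemma aux_pos (x0 L : ℝ) (hx0 : 0 < x0) (hL : 3 * x0 < L) :
    0 < Real.sqrt (x0 / (L + x0)) ∧ L < kap x0 L := by
  have h0 : 0 < x0 / (L + x0) := by apply div_pos <;> linarith
  have hq : 0 < Real.sqrt (x0 / (L + x0)) := Real.sqrt_pos.2 h0
  have hq2 : Real.sqrt (x0 / (L + x0)) < 1 / 2 := by
    rw [Real.sqrt_lt' (by norm_num), div_lt_iff₀ (by linarith)]
    linarith
  refine ⟨hq, ?_⟩
  have hpi := Real.pi_pos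
  have hs0 : 0 < sig x0 L := mul_pos hpi hq
  have hs1 : sig x0 L < π / 2 := by unfold sig; nlinarith
  have h1 : 0 < Real.sin (sig x0 L) := Real.sin_pos_of_pos_of_lt_pi hs0 (by linarith)
  have h2 : Real.sin (sig x0 L) < 1 := by
    rw [← Real.sin_pi_div_two]
    exact Real.sin_lt_sin_of_lt_of_le_pi_div_two (by linarith) le_rfl hs1
  unfold kap
  rw [lt_div_iff₀ h1]
  nlinarith

lemma aux_H (x0 L : ℝ) (s : ℝ) :
    Hc x0 L s = 1 / (Real.sqrt (x0 / (L + x0)) * Real.sqrt (kap x0 L ^ 2 - (s - L) ^ 2)) := by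
  unfold Hc sig
  rw [mul_assoc, div_mul_eq_div_div, div_self Real.pi_pos.ne']

lemma aux_pos2 (x0 L : ℝ) (hx0 : 0 < x0) (hL : 3 * x0 < L) (s : ℝ)
    (hs : s ∈ Set.Ioo (0:ℝ) (2 * L)) : 0 < kap x0 L ^ 2 - (s - L) ^ 2 := by
  obtain ⟨h1, h2⟩ := aux_pos x0 L hx0 hL
  obtain ⟨h3, h4⟩ := hs
  nlinarith

lemma aux_th (x0 L : ℝ) (hx0 : 0 < x0) (hL : 3 * x0 < L) (s : ℝ)
    (hs : s ∈ Set.Ioo (0:ℝ) (2 * L)) : HasDerivAt (th x0 L) (Hc x0 L s) s := by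
  obtain ⟨h1, h2⟩ := aux_pos x0 L hx0 hL
  have hp := aux_pos2 x0 L hx0 hL s hs
  obtain ⟨h3, h4⟩ := hs
  have hk : 0 < kap x0 L := by linarith
  have ha : HasDerivAt (fun r => (r - L) / kap x0 L) (1 / kap x0 L) s :=
    ((hasDerivAt_id s).sub_const L).div_const _
  have hb := (Real.hasDerivAt_arcsin (x := (s - L) / kap x0 L)
    (by apply ne_of_gt; rw [lt_div_iff₀ hk]; linarith)
    (by apply ne_of_lt; rw [div_lt_iff₀ hk]; linarith)).comp s ha
  have hc := (hb.add_const (sig x0 L)).const_mul (π / sig x0 L)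
  refine hc.congr_deriv ?_
  have e : 1 - ((s - L) / kap x0 L) ^ 2 = (kap x0 L ^ 2 - (s - L) ^ 2) / kap x0 L ^ 2 := by
    field_simp
  rw [e, Real.sqrt_div hp.le, Real.sqrt_sq hk.le]
  unfold Hc
  have := Real.sqrt_pos.2 hp
  have hsg : 0 < sig x0 L := mul_pos Real.pi_pos h1
  field_simp

lemma aux_w (x0 L : ℝ) (hx0 : 0 < x0) (hL : 3 * x0 < L) (s : ℝ)
    (hs : s ∈ Set.Ioo (0:ℝ) (2 * L)) :
    HasDerivAt (fun r => Real.sqrt (kap x0 L ^ 2 - (r - L) ^ 2))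
      (-(s - L) / Real.sqrt (kap x0 L ^ 2 - (s - L) ^ 2)) s := by
  have hp := aux_pos2 x0 L hx0 hL s hs
  have ha : HasDerivAt (fun r => kap x0 L ^ 2 - (r - L) ^ 2) (-(2 * (s - L))) s := by
    have := (((hasDerivAt_id s).sub_const L).pow 2).const_sub (kap x0 L ^ 2)
    refine this.congr_deriv ?_
    simp
  refine (ha.sqrt hp.ne').congr_deriv ?_
  have := Real.sqrt_pos.2 hp
  field_simp

lemma aux_Hd (x0 L : ℝ) (hx0 : 0 < x0) (hL : 3 * x0 < L) (s : ℝ)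
    (hs : s ∈ Set.Ioo (0:ℝ) (2 * L)) :
    HasDerivAt (Hc x0 L) (x0 / (L + x0) * (s - L) * Hc x0 L s ^ 3) s := by
  obtain ⟨h1, h2⟩ := aux_pos x0 L hx0 hL
  have hw := Real.sqrt_pos.2 (aux_pos2 x0 L hx0 hL s hs)
  have h0 : 0 < x0 / (L + x0) := by apply div_pos <;> linarith
  have hq := Real.sq_sqrt h0.le
  have ha := ((aux_w x0 L hx0 hL s hs).const_mul (Real.sqrt (x0 / (L + x0)))).inv
    (mul_pos h1 hw).ne'
  have e : Hc x0 L = fun s => (Real.sqrt (x0 / (L + x0)) * Real.sqrt (kap x0 L ^ 2 - (s - L) ^ 2))⁻¹ := by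
    funext r; rw [aux_H, one_div]
  rw [e]
  refine ha.congr_deriv ?_
  rw [← hq, Real.sqrt_sq h1.le]
  generalize Real.sqrt (x0 / (L + x0)) = q at *
  field_simp

lemma aux_main (x0 L : ℝ) (hx0 : 0 < x0) (hL : 3 * x0 < L) (f f1 f2 f3 f4 : ℝ → ℝ)
    (d0 : ∀ x, HasDerivAt f (f1 x) x) (d1 : ∀ x, HasDerivAt f1 (f2 x) x)
    (d2 : ∀ x, HasDerivAt f2 (f3 x) x) (d3 : ∀ x, HasDerivAt f3 (f4 x) x)
    (hf : ∀ x, f4 x + 2 * Real.sqrt (x0 / (L + x0)) * f2 x + x0 / (L + x0) * f x = 0)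
    (s : ℝ) (hs : s ∈ Set.Ioo (0:ℝ) (2 * L)) :
    Lop x0 L (-(x0 / (L + x0)) + 2 * Real.sqrt (x0 / (L + x0)))
      (fun r => f (th x0 L r)) s = 0 := by
  have ev : ∀ {g h : ℝ → ℝ}, (∀ r ∈ Set.Ioo (0:ℝ) (2 * L), g r = h r) →
      ∀ r ∈ Set.Ioo (0:ℝ) (2 * L), g =ᶠ[nhds r] h := fun H r hr =>
    Filter.eventually_of_mem (isOpen_Ioo.mem_nhds hr) H
  have hH : ∀ r ∈ Set.Ioo (0:ℝ) (2 * L), Hc x0 L r ≠ 0 := by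
    intro r hr
    obtain ⟨h1, h2⟩ := aux_pos x0 L hx0 hL
    have hw := Real.sqrt_pos.2 (aux_pos2 x0 L hx0 hL r hr)
    rw [aux_H]; positivity
  have hT := aux_th x0 L hx0 hL
  have hD := aux_Hd x0 L hx0 hL
  have c : ∀ {g g' : ℝ → ℝ}, (∀ x, HasDerivAt g (g' x) x) → ∀ r ∈ Set.Ioo (0:ℝ) (2 * L),
      HasDerivAt (fun r => g (th x0 L r)) (g' (th x0 L r) * Hc x0 L r) r := fun H r hr =>
    (H (th x0 L r)).comp r (hT r hr)
  have u1 : ∀ r ∈ Set.Ioo (0:ℝ) (2 * L), deriv (fun r => f (th x0 L r)) r =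
      f1 (th x0 L r) * Hc x0 L r := fun r hr => (c d0 r hr).deriv
  have u2 : ∀ r ∈ Set.Ioo (0:ℝ) (2 * L), deriv (deriv (fun r => f (th x0 L r))) r =
      f2 (th x0 L r) * Hc x0 L r * Hc x0 L r +
        f1 (th x0 L r) * (x0 / (L + x0) * (r - L) * Hc x0 L r ^ 3) := fun r hr => by
    rw [(ev u1 r hr).deriv_eq]
    exact ((c d1 r hr).mul (hD r hr)).deriv
  have v0 : ∀ r ∈ Set.Ioo (0:ℝ) (2 * L),
      2 / Hc x0 L r ^ 3 * deriv (deriv (fun r => f (th x0 L r))) r =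
      2 * (f2 (th x0 L r) * (Hc x0 L r)⁻¹ +
        f1 (th x0 L r) * (x0 / (L + x0) * (r - L))) := fun r hr => by
    rw [u2 r hr]
    have := hH r hr
    generalize x0 / (L + x0) = p
    field_simp
  have v1 : ∀ r ∈ Set.Ioo (0:ℝ) (2 * L),
      deriv (fun r => 2 / Hc x0 L r ^ 3 * deriv (deriv (fun r => f (th x0 L r))) r) r =
      2 * (f3 (th x0 L r) + x0 / (L + x0) * f1 (th x0 L r)) := fun r hr => by
    rw [(ev v0 r hr).deriv_eq]
    have hl : HasDerivAt (fun r => x0 / (L + x0) * (r - L)) (x0 / (L + x0) * 1) r :=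
      ((hasDerivAt_id r).sub_const L).const_mul _
    have := ((((c d2 r hr).mul ((hD r hr).inv (hH r hr))).add
      ((c d1 r hr).mul hl)).const_mul 2).deriv
    refine Eq.trans this ?_
    have := hH r hr
    generalize x0 / (L + x0) = p
    simp only [Pi.inv_apply]
    field_simp
    ring
  have v2 : deriv (deriv (fun r => 2 / Hc x0 L r ^ 3 * deriv (deriv (fun r => f (th x0 L r))) r)) s
      = 2 * (f4 (th x0 L s) * Hc x0 L s + x0 / (L + x0) * (f2 (th x0 L s) * Hc x0 L s)) := by
    rw [(ev v1 s hs).deriv_eq]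
    exact (((c d3 s hs).add ((c d1 s hs).const_mul _)).const_mul 2).deriv
  have w0 : ∀ r ∈ Set.Ioo (0:ℝ) (2 * L),
      2 / Hc x0 L r * deriv (fun r => f (th x0 L r)) r = 2 * f1 (th x0 L r) := fun r hr => by
    rw [u1 r hr]
    have := hH r hr
    field_simp
  have w1 : deriv (fun r => 2 / Hc x0 L r * deriv (fun r => f (th x0 L r)) r) s =
      2 * (f2 (th x0 L s) * Hc x0 L s) := by
    rw [(ev w0 s hs).deriv_eq]
    exact ((c d1 s hs).const_mul 2).deriv
  have e : 2 - 2 * L / (L + x0) = 2 * (x0 / (L + x0)) := by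
    have : L + x0 ≠ 0 := by linarith
    field_simp
    ring
  unfold Lop
  rw [v2, w1, e]
  linear_combination 2 * Hc x0 L s * hf (th x0 L s)

/-- in the critical case `μ₀ = −x₀/(L+x₀) + 2√(x₀/(L+x₀))`, with
`α = (x₀/(L+x₀))^{1/4}`, the functions `θ sin(αθ)` and `θ cos(αθ)` solve the homogeneous
stability equation. -/
theorem statement14 (x0 L : ℝ) (hx0 : 0 < x0) (hL : 3 * x0 < L) :
    ∀ s ∈ Set.Ioo (0:ℝ) (2 * L),
      Lop x0 L (-(x0 / (L + x0)) + 2 * Real.sqrt (x0 / (L + x0)))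
          (fun r => th x0 L r *
            Real.sin ((x0 / (L + x0)) ^ ((1:ℝ) / 4) * th x0 L r)) s = 0 ∧
      Lop x0 L (-(x0 / (L + x0)) + 2 * Real.sqrt (x0 / (L + x0)))
          (fun r => th x0 L r *
            Real.cos ((x0 / (L + x0)) ^ ((1:ℝ) / 4) * th x0 L r)) s = 0 := by
  intro s hs
  have h0 : 0 < x0 / (L + x0) := by apply div_pos <;> linarith
  have ha2 : ((x0 / (L + x0)) ^ ((1:ℝ) / 4)) ^ 2 = Real.sqrt (x0 / (L + x0)) := by
    rw [Real.sqrt_eq_rpow, ← Real.rpow_natCast, ← Real.rpow_mul h0.le]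
    norm_num
  have ha4 : ((x0 / (L + x0)) ^ ((1:ℝ) / 4)) ^ 4 = x0 / (L + x0) := by
    rw [← Real.rpow_natCast, ← Real.rpow_mul h0.le]
    norm_num
  generalize (x0 / (L + x0)) ^ ((1:ℝ) / 4) = a at *
  have hS : ∀ x, HasDerivAt (fun x => Real.sin (a * x)) (a * Real.cos (a * x)) x := fun x => by
    have := ((hasDerivAt_id x).const_mul a).sin
    refine this.congr_deriv ?_
    simp; ring
  have hC : ∀ x, HasDerivAt (fun x => Real.cos (a * x)) (-a * Real.sin (a * x)) x := fun x => by
    have := ((hasDerivAt_id x).const_mul a).cos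
    refine this.congr_deriv ?_
    simp; ring
  have key : ∀ p q r t x : ℝ, HasDerivAt
      (fun x => (p + q * x) * Real.sin (a * x) + (r + t * x) * Real.cos (a * x))
      (((q - a * r) + (-a * t) * x) * Real.sin (a * x) +
        ((a * p + t) + (a * q) * x) * Real.cos (a * x)) x := fun p q r t x => by
    have l1 : HasDerivAt (fun x => p + q * x) (q * 1) x :=
      ((hasDerivAt_id x).const_mul q).const_add p
    have l2 : HasDerivAt (fun x => r + t * x) (t * 1) x :=
      ((hasDerivAt_id x).const_mul t).const_add r
    refine ((l1.mul (hS x)).add (l2.mul (hC x))).congr_deriv ?_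
    ring
  constructor
  · have := aux_main x0 L hx0 hL _ _ _ _ _ (key 0 1 0 0) (key _ _ _ _) (key _ _ _ _)
      (key _ _ _ _) (fun x => by rw [← ha2, ← ha4]; ring) s hs
    simpa using this
  · have := aux_main x0 L hx0 hL _ _ _ _ _ (key 0 0 0 1) (key _ _ _ _) (key _ _ _ _)
      (key _ _ _ _) (fun x => by rw [← ha2, ← ha4]; ring) s hs
    simpa using this
end
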